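/- Consider the stochastic regression model X_{n+1} = θ^t Φ_n + ε_{n+1} with least squares estimator θ̂_n. Let p ≥ 1 be an integer and assume (ε_n) is a martingale difference sequence with E[ε_{n+1}² | F_n] = σ² a.s. and sup_{n≥0} E[|ε_{n+1}|^a | F_n] < ∞ a.s. for some a > 2p, the explosion coefficient f_n → 0 a.s., and S_n/α_n → L a.s. for some positive random sequence (α_n) increasing to infinity and some symmetric positive definite d×d matrix L. Then almost surely lim_{n→∞} (1/log d_n) Σ_{k=1}^n f_k ((θ̂_k − θ)^t S_k (θ̂_k − θ))^p = ℓ(p), where ℓ(p) = d σ^{2p} ∏_{j=1}^{p-1} (d + 2j). -/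

import Mathlib

open MeasureTheory ProbabilityTheory Filter Finset Matrix Topology

noncomputable section

/-- `S_n = S + ∑_{k=0}^n Φ_k Φ_kᵗ`. -/
def Smat {Ω : Type*} {d : ℕ} (S : Matrix (Fin d) (Fin d) ℝ)
    (Φ : ℕ → Ω → Fin d → ℝ) (n : ℕ) (ω : Ω) : Matrix (Fin d) (Fin d) ℝ :=
  S + ∑ k ∈ Finset.range (n + 1), vecMulVec (Φ k ω) (Φ k ω)

/-- The explosion coefficient `f_n = Φ_nᵗ S_n⁻¹ Φ_n`. -/
def expl {Ω : Type*} {d : ℕ} (S : Matrix (Fin d) (Fin d) ℝ)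
    (Φ : ℕ → Ω → Fin d → ℝ) (n : ℕ) (ω : Ω) : ℝ :=
  Φ n ω ⬝ᵥ ((Smat S Φ n ω)⁻¹ *ᵥ Φ n ω)

/-- The least squares estimator `θ̂_n = S_{n-1}⁻¹ ∑_{k=1}^n Φ_{k-1} X_k`. -/
def lsq {Ω : Type*} {d : ℕ} (S : Matrix (Fin d) (Fin d) ℝ)
    (Φ : ℕ → Ω → Fin d → ℝ) (X : ℕ → Ω → ℝ) (n : ℕ) (ω : Ω) : Fin d → ℝ :=
  (Smat S Φ (n - 1) ω)⁻¹ *ᵥ ∑ k ∈ Finset.Icc 1 n, X k ω • Φ (k - 1) ω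

/-!
The vector `M n = -S θ + ∑_{k ≤ n} ε_k Φ_{k-1}` satisfies `θ̂_n - θ = S_{n-1}⁻¹ M n`. Consider two
quadratic forms in it: the one of the inverse Gram matrix, and the one of `L⁻¹ / scale`, where the
scalar `scale` is the order of growth of the Gram matrices. They agree to leading order, but when
the next `Φ` arrives the first decreases by the square of its slope in the noise, while the second
decreases by the proportion `h / d`, where the steps `h` sum to `log d_n` to leading order. The
martingale parts of the `p`-th powers of both forms are negligible, so the drifts balance: comparing
them expresses the sums weighted by the squared slope by those weighted by the step, which closes a
recursion in the power `p` with factor `σ ^ 2 * (d + 2 * p)`.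
-/

/-! ### Robbins–Siegmund without integrability -/

section RobbinsSiegmund

variable {Ω : Type*} {m m0 : MeasurableSpace Ω} {μ : Measure Ω}

/-- `D` is the conditional expectation of `V` given `m` in the extended sense: `V` need not be
integrable, only `g * V` for some `m`-measurable weight `0 < g ≤ 1`. -/
def IsLocalCondExp (μ : Measure Ω) (m : MeasurableSpace Ω) (V D : Ω → ℝ) : Prop :=
  StronglyMeasurable[m] D ∧ ∃ g : Ω → ℝ, StronglyMeasurable[m] g ∧ (∀ ω, 0 < g ω ∧ g ω ≤ 1) ∧
    Integrable (g * V) μ ∧ μ[g * V | m] =ᵐ[μ] g * D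

lemma condExp_mul_of_abs_le [IsFiniteMeasure μ] (hm : m ≤ m0) {b V D : Ω → ℝ} {C : ℝ}
    (hb : StronglyMeasurable[m] b) (hbC : ∀ ω, |b ω| ≤ C) (hV : Integrable V μ)
    (hD : μ[V | m] =ᵐ[μ] D) :
    Integrable (b * V) μ ∧ μ[b * V | m] =ᵐ[μ] b * D :=
  ⟨hV.bdd_mul (hb.mono hm).aestronglyMeasurable (ae_of_all _ hbC),
    (condExp_stronglyMeasurable_mul_of_bound hm hb hV C (ae_of_all _ hbC)).trans
      (EventuallyEq.rfl.mul hD)⟩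

namespace IsLocalCondExp

variable {V V' D D' c : Ω → ℝ}

lemma of_integrable (hV : Integrable V μ) (hD : StronglyMeasurable[m] D)
    (h : μ[V | m] =ᵐ[μ] D) : IsLocalCondExp μ m V D :=
  ⟨hD, 1, stronglyMeasurable_const, fun _ => ⟨one_pos, le_rfl⟩, by simpa using hV,
    by simpa using h⟩

lemma mul_left [IsFiniteMeasure μ] (hm : m ≤ m0) (hc : StronglyMeasurable[m] c)
    (h : IsLocalCondExp μ m V D) : IsLocalCondExp μ m (c * V) (c * D) := by
  obtain ⟨hD, g, hg, hg01, hi, he⟩ := h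
  set r : Ω → ℝ := fun ω => (1 + |c ω|)⁻¹ with hr
  have hpos (ω : Ω) : 0 < 1 + |c ω| := by positivity
  have hrm : StronglyMeasurable[m] r := (stronglyMeasurable_const.add hc.norm).inv₀
  have hbound (ω : Ω) : |(c * r) ω| ≤ 1 := by
    rw [Pi.mul_apply, hr, abs_mul, abs_inv, abs_of_pos (hpos ω), ← div_eq_mul_inv,
      div_le_one (hpos ω)]
    linarith
  obtain ⟨hi', he'⟩ := condExp_mul_of_abs_le hm (hc.mul hrm) hbound hi he
  refine ⟨hc.mul hD, g * r, hg.mul hrm, fun ω => ⟨?_, ?_⟩, ?_, ?_⟩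
  · exact mul_pos (hg01 ω).1 (inv_pos.2 (hpos ω))
  · exact mul_le_one₀ (hg01 ω).2 (inv_pos.2 (hpos ω)).le
      (inv_le_one_of_one_le₀ (le_add_of_nonneg_right (abs_nonneg _)))
  · rwa [show g * r * (c * V) = c * r * (g * V) by ring]
  · rwa [show g * r * (c * V) = c * r * (g * V) by ring,
      show g * r * (c * D) = c * r * (g * D) by ring]

lemma add [IsFiniteMeasure μ] (hm : m ≤ m0) (h : IsLocalCondExp μ m V D)
    (h' : IsLocalCondExp μ m V' D') : IsLocalCondExp μ m (V + V') (D + D') := by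
  obtain ⟨hD, g, hg, hg01, hi, he⟩ := h
  obtain ⟨hD', g', hg', hg01', hi', he'⟩ := h'
  have habs {g : Ω → ℝ} (h : ∀ ω, 0 < g ω ∧ g ω ≤ 1) (ω : Ω) : |g ω| ≤ 1 :=
    (abs_of_pos (h ω).1).trans_le (h ω).2
  obtain ⟨hj, hk⟩ := condExp_mul_of_abs_le hm hg' (habs hg01') hi he
  obtain ⟨hj', hk'⟩ := condExp_mul_of_abs_le hm hg (habs hg01) hi' he'
  have hsplit : g * g' * (V + V') = g' * (g * V) + g * (g' * V') := by ring
  refine ⟨hD.add hD', g * g', hg.mul hg', fun ω => ⟨mul_pos (hg01 ω).1 (hg01' ω).1,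
    mul_le_one₀ (hg01 ω).2 (hg01' ω).1.le (hg01' ω).2⟩, ?_, ?_⟩
  · rw [hsplit]; exact hj.add hj'
  · rw [hsplit]
    refine (condExp_add hj hj' m).trans ((hk.add hk').trans (ae_of_all _ fun ω => ?_))
    simp only [Pi.add_apply, Pi.mul_apply]
    ring

lemma of_stronglyMeasurable [IsFiniteMeasure μ] (hm : m ≤ m0) (hc : StronglyMeasurable[m] c) :
    IsLocalCondExp μ m c c := by
  have h1 : IsLocalCondExp μ m (1 : Ω → ℝ) 1 :=
    of_integrable (integrable_const 1) stronglyMeasurable_const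
      (condExp_const hm (1 : ℝ)).eventuallyEq
  simpa using h1.mul_left hm hc

lemma sub_self [IsFiniteMeasure μ] (hm : m ≤ m0) (h : IsLocalCondExp μ m V D) :
    IsLocalCondExp μ m (V - D) 0 := by
  simpa [← sub_eq_add_neg] using h.add hm (of_stronglyMeasurable hm h.1.neg)

end IsLocalCondExp

lemma exists_ae_bddAbove_sub [IsFiniteMeasure μ] {J : ℕ → Ω → ℝ} (hJ : ∀ n, Measurable (J n)) :
    ∃ r : ℕ → ℝ, ∀ᵐ ω ∂μ, BddAbove (Set.range fun n => J n ω - r n) := by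
  have hsmall (n : ℕ) : ∃ r : ℕ, μ {ω | (r : ℝ) < J n ω} ≤ (2 : ENNReal)⁻¹ ^ n := by
    have hlim := tendsto_measure_iInter_atTop (μ := μ) (s := fun r : ℕ => {ω | (r : ℝ) < J n ω})
      (fun r => (measurableSet_lt measurable_const (hJ n)).nullMeasurableSet)
      (fun a b hab ω (hω : (b : ℝ) < _) => (Nat.cast_le.2 hab).trans_lt hω)
      ⟨0, measure_ne_top _ _⟩
    have hempty : (⋂ r : ℕ, {ω | (r : ℝ) < J n ω}) = ∅ := by
      refine Set.eq_empty_of_forall_notMem fun ω hω => ?_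
      obtain ⟨r, hr⟩ := exists_nat_ge (J n ω)
      exact (Set.mem_iInter.1 hω r).not_ge hr
    rw [hempty, measure_empty] at hlim
    have hpos : (0 : ENNReal) < (2 : ENNReal)⁻¹ ^ n := ENNReal.pow_pos (by simp) n
    obtain ⟨r, hr⟩ := (hlim.eventually (gt_mem_nhds hpos)).exists
    exact ⟨r, hr.le⟩
  choose r hr using hsmall
  have hsum : ∑' n, μ {ω | (r n : ℝ) < J n ω} ≠ ⊤ :=
    ne_top_of_le_ne_top (by rw [ENNReal.tsum_geometric]; simp) (ENNReal.tsum_le_tsum hr)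
  refine ⟨fun n => r n, ?_⟩
  filter_upwards [ae_eventually_notMem hsum] with ω hω
  have hle : ∀ᶠ n in atTop, J n ω - r n ≤ 0 := hω.mono fun n hn => sub_nonpos.2 (not_lt.1 hn)
  exact (isBoundedUnder_of_eventually_le hle).bddAbove_range

variable [IsProbabilityMeasure μ] {F : Filtration ℕ m0}

lemma ae_bddAbove_of_martingale_of_le {N : ℕ → Ω → ℝ} (hN : Martingale N F μ) (hN0 : N 0 = 0)
    {j : ℝ} (hle : ∀ n ω, -j ≤ N n ω) : ∀ᵐ ω ∂μ, BddAbove (Set.range fun n => N n ω) := by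
  have hint (n : ℕ) : ∫ ω, N n ω ∂μ = 0 := by
    have h := hN.setIntegral_eq n.zero_le MeasurableSet.univ
    simpa [hN0] using h.symm
  have hL1 (n : ℕ) : eLpNorm (N n) 1 μ ≤ ((2 * |j|).toNNReal : NNReal) := by
    rw [eLpNorm_one_eq_lintegral_enorm, ← ofReal_integral_norm_eq_lintegral_enorm (hN.integrable n)]
    refine ENNReal.ofReal_le_ofReal ?_
    calc ∫ ω, ‖N n ω‖ ∂μ ≤ ∫ ω, (N n ω + 2 * |j|) ∂μ := by
          refine integral_mono (hN.integrable n).norm ((hN.integrable n).add (integrable_const _))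
            fun ω => ?_
          have := hle n ω
          have := le_abs_self j
          exact abs_le.2 ⟨by linarith, by linarith [abs_nonneg j]⟩
      _ = 2 * |j| := by
          rw [integral_add (hN.integrable n) (integrable_const _), hint]; simp
  filter_upwards [hN.submartingale.exists_ae_tendsto_of_bdd hL1] with ω hω
  obtain ⟨c, hc⟩ := hω
  exact hc.bddAbove_range

lemma martingale_sum_indicator {ξ g : ℕ → Ω → ℝ} {E : ℕ → Set Ω} {r : ℕ → ℝ}
    (hξm : ∀ n, StronglyMeasurable[F (n + 1)] (ξ n)) (hgm : ∀ n, StronglyMeasurable[F n] (g n))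
    (hg0 : ∀ n ω, 0 < g n ω) (hi : ∀ n, Integrable (g n * ξ n) μ)
    (hc : ∀ n, μ[g n * ξ n | F n] =ᵐ[μ] 0) (hE : ∀ n, MeasurableSet[F n] (E n))
    (hr : ∀ n, ∀ ω ∈ E n, (g n ω)⁻¹ ≤ r n) :
    Martingale (fun n ω => ∑ k ∈ range n, (E k).indicator (ξ k) ω) F μ := by
  have hkey (n : ℕ) : Integrable ((E n).indicator (ξ n)) μ ∧
      μ[(E n).indicator (ξ n) | F n] =ᵐ[μ] 0 := by
    have hb : ∀ ω, |(E n).indicator (g n)⁻¹ ω| ≤ |r n| := fun ω => by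
      by_cases hω : ω ∈ E n
      · rw [Set.indicator_of_mem hω, Pi.inv_apply, abs_of_pos (inv_pos.2 (hg0 n ω))]
        exact (hr n ω hω).trans (le_abs_self _)
      · simp [Set.indicator_of_notMem hω]
    have heq : (E n).indicator (g n)⁻¹ * (g n * ξ n) = (E n).indicator (ξ n) := by
      ext ω
      by_cases hω : ω ∈ E n <;> simp [hω, (hg0 n ω).ne']
    have := condExp_mul_of_abs_le (F.le n) ((hgm n).inv₀.indicator (hE n)) hb (hi n) (hc n)
    rwa [heq, mul_zero] at this
  refine martingale_of_condExp_sub_eq_zero_nat (fun n => ?_) (fun n => ?_) (fun n => ?_)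
  · exact Finset.stronglyMeasurable_fun_sum _ fun k hk =>
      ((hξm k).mono (F.mono (mem_range.1 hk))).indicator
        (F.mono (mem_range.1 hk).le _ (hE k))
  · exact integrable_finsetSum _ fun k _ => (hkey k).1
  · convert (hkey n).2 using 3
    ext ω
    simp [sum_range_succ]

lemma ae_bddAbove_sum_of_isLocalCondExp_zero {ξ B : ℕ → Ω → ℝ}
    (hξm : ∀ n, StronglyMeasurable[F (n + 1)] (ξ n))
    (hξ : ∀ n, IsLocalCondExp μ (F n) (ξ n) 0) (hBm : ∀ n, StronglyMeasurable[F n] (B n))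
    (hle : ∀ n ω, -B n ω ≤ ∑ k ∈ range (n + 1), ξ k ω)
    (hB : ∀ᵐ ω ∂μ, BddAbove (Set.range fun n => B n ω)) :
    ∀ᵐ ω ∂μ, BddAbove (Set.range fun n => ∑ k ∈ range n, ξ k ω) := by
  choose _ g hgm hg01 hi hc using hξ
  obtain ⟨r, hr⟩ := exists_ae_bddAbove_sub (μ := μ)
    fun n => ((hgm n).inv₀.mono (F.le n)).measurable
  -- Stopping once a weight or a bound exceeds the level `j` leaves a martingale bounded below, and
  -- almost every path is never stopped for large `j`.
  set E : ℕ → ℕ → Set Ω := fun j n => {ω | ∀ k ≤ n, (g k ω)⁻¹ ≤ r k + j ∧ B k ω ≤ j} with hE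
  have hEm (j n : ℕ) : MeasurableSet[F n] (E j n) := by
    simp only [hE, Set.ofPred_forall, Set.ofPred_and]
    refine MeasurableSet.iInter fun k => MeasurableSet.iInter fun hk => F.mono hk _ ?_
    exact (measurableSet_le (hgm k).inv₀.measurable measurable_const).inter
      (measurableSet_le (hBm k).measurable measurable_const)
  have hanti {j n k : ℕ} {ω : Ω} (hω : ω ∈ E j n) (hk : k ≤ n) : ω ∈ E j k :=
    fun i hi => hω i (hi.trans hk)
  have hmem {j n : ℕ} {ω : Ω} (hω : ∀ k < n, ω ∈ E j k) :
      ∑ k ∈ range n, (E j k).indicator (ξ k) ω = ∑ k ∈ range n, ξ k ω :=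
    sum_congr rfl fun k hk => Set.indicator_of_mem (hω k (mem_range.1 hk)) _
  have hlow (j n : ℕ) (ω : Ω) : -(j : ℝ) ≤ ∑ k ∈ range n, (E j k).indicator (ξ k) ω := by
    induction n with
    | zero => simp
    | succ n ih =>
      by_cases hω : ω ∈ E j n
      · rw [hmem fun k hk => hanti hω (Nat.lt_succ_iff.1 hk)]
        linarith [hle n ω, (hω n le_rfl).2]
      · rwa [sum_range_succ, Set.indicator_of_notMem hω, add_zero]
  have hbdd (j : ℕ) := ae_bddAbove_of_martingale_of_le
    (martingale_sum_indicator hξm hgm (fun n ω => (hg01 n ω).1) hi (by simpa using hc) (hEm j)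
      fun n ω hω => (hω n le_rfl).1) (by ext; simp) (hlow j)
  filter_upwards [ae_all_iff.2 hbdd, hr, hB] with ω hbdd hr hB
  obtain ⟨b, hb⟩ := hB
  obtain ⟨c, hc⟩ := hr
  obtain ⟨j, hj⟩ := exists_nat_ge (max b c)
  have hall (n : ℕ) : ω ∈ E j n := fun k _ =>
    ⟨sub_le_iff_le_add'.1 ((hc ⟨k, rfl⟩).trans ((le_max_right _ _).trans hj)),
      (hb ⟨k, rfl⟩).trans ((le_max_left _ _).trans hj)⟩
  simpa only [hmem fun k _ => hall k] using hbdd j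

theorem robbins_siegmund {Y V D w : ℕ → Ω → ℝ}
    (hY0m : StronglyMeasurable[F 0] (Y 0)) (hVm : ∀ n, StronglyMeasurable[F (n + 1)] (V n))
    (hVD : ∀ n, IsLocalCondExp μ (F n) (V n) (D n)) (hY : ∀ n ω, 0 ≤ Y n ω)
    (hw : ∀ n ω, 0 ≤ w n ω) (hrec : ∀ n ω, Y (n + 1) ω ≤ Y n ω + V n ω)
    (hD : ∀ᵐ ω ∂μ, ∃ v : ℕ → ℝ, Summable v ∧ (∀ n, 0 ≤ v n) ∧ ∀ n, D n ω + w n ω ≤ v n) :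
    ∀ᵐ ω ∂μ, BddAbove (Set.range fun n => Y n ω) ∧ Summable fun n => w n ω := by
  have hYle (n : ℕ) (ω : Ω) : Y n ω ≤ Y 0 ω + ∑ k ∈ range n, V k ω := by
    induction n with
    | zero => simp
    | succ n ih => rw [sum_range_succ]; linarith [hrec n ω]
  have hDpos (n : ℕ) (ω : Ω) : ∑ k ∈ range n, D k ω ≤ ∑ k ∈ range n, max (D k ω) 0 :=
    sum_le_sum fun k _ => le_max_left _ _
  set B : ℕ → Ω → ℝ := fun n ω => Y 0 ω + ∑ k ∈ range (n + 1), max (D k ω) 0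
  have hBm (n : ℕ) : StronglyMeasurable[F n] (B n) := by
    refine (hY0m.mono (F.mono n.zero_le)).add (Finset.stronglyMeasurable_fun_sum _ fun k hk => ?_)
    have hDk := (hVD k).1.mono (F.mono (Nat.lt_succ_iff.1 (mem_range.1 hk)))
    exact (continuous_id.max continuous_const).comp_stronglyMeasurable hDk
  have hBbdd : ∀ᵐ ω ∂μ, BddAbove (Set.range fun n => B n ω) := by
    filter_upwards [hD] with ω ⟨v, hv, hv0, hDv⟩
    refine ⟨Y 0 ω + ∑' k, v k, ?_⟩
    rintro _ ⟨n, rfl⟩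
    have : ∑ k ∈ range (n + 1), max (D k ω) 0 ≤ ∑ k ∈ range (n + 1), v k :=
      sum_le_sum fun k _ => max_le (by linarith [hDv k, hw k ω]) (hv0 k)
    linarith [hv.sum_le_tsum (range (n + 1)) fun k _ => hv0 k]
  have hlow (n : ℕ) (ω : Ω) : -B n ω ≤ ∑ k ∈ range (n + 1), (V k - D k) ω := by
    simp only [Pi.sub_apply, sum_sub_distrib]
    linarith [hYle (n + 1) ω, hY (n + 1) ω, hDpos (n + 1) ω]
  have hbdd := ae_bddAbove_sum_of_isLocalCondExp_zero
    (fun n => (hVm n).sub ((hVD n).1.mono (F.mono n.le_succ)))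
    (fun n => (hVD n).sub_self (F.le n)) hBm hlow hBbdd
  filter_upwards [hbdd, hD] with ω ⟨b, hb⟩ ⟨v, hv, hv0, hDv⟩
  have hkey (n : ℕ) : Y n ω + ∑ k ∈ range n, w k ω ≤ Y 0 ω + b + ∑' k, v k := by
    have h1 := hb ⟨n, rfl⟩
    have h2 : ∑ k ∈ range n, (D k ω + w k ω) ≤ ∑ k ∈ range n, v k := sum_le_sum fun k _ => hDv k
    simp only [Pi.sub_apply, sum_sub_distrib] at h1
    rw [sum_add_distrib] at h2
    linarith [hYle n ω, hv.sum_le_tsum (range n) fun k _ => hv0 k]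
  refine ⟨⟨Y 0 ω + b + ∑' k, v k, ?_⟩, summable_of_sum_range_le (fun n => hw n ω) fun n =>
    (le_add_of_nonneg_left (hY n ω)).trans (hkey n)⟩
  rintro _ ⟨n, rfl⟩
  exact (le_add_of_nonneg_right (sum_nonneg fun k _ => hw k ω)).trans (hkey n)

end RobbinsSiegmund

/-! ### Martingale transforms -/

section MartingaleTransform

lemma abs_sub_rpow_le {s : ℝ} (hs : 0 ≤ s) (x y : ℝ) :
    |x - y| ^ s ≤ 2 ^ s * (|x| ^ s + |y| ^ s) := by
  wlog hxy : |y| ≤ |x| generalizing x y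
  · rw [abs_sub_comm, add_comm]
    exact this y x (le_of_not_ge hxy)
  calc |x - y| ^ s ≤ (2 * |x|) ^ s :=
        Real.rpow_le_rpow (abs_nonneg _) (by linarith [abs_sub x y]) hs
    _ = 2 ^ s * |x| ^ s := Real.mul_rpow zero_le_two (abs_nonneg x)
    _ ≤ 2 ^ s * (|x| ^ s + |y| ^ s) := by gcongr; exact le_add_of_nonneg_right (by positivity)

lemma abs_rpow_sub_two_mul_sq {x : ℝ} (s : ℝ) (hx : x ≠ 0) :
    |x| ^ (s - 2) * x ^ 2 = |x| ^ s := by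
  rw [← sq_abs, ← Real.rpow_natCast, ← Real.rpow_add (abs_pos.2 hx)]
  norm_num

lemma abs_rpow_sub_two_mul_le {s : ℝ} (hs : 1 ≤ s) {x v : ℝ} (hxv : |x| ≤ |v|) :
    |x| ^ (s - 2) * |x| * |v| ≤ |v| ^ s := by
  rcases eq_or_ne x 0 with rfl | hx
  · simpa using Real.rpow_nonneg (abs_nonneg v) s
  · calc |x| ^ (s - 2) * |x| * |v| = |x| ^ (s - 1) * |v| := by
          rw [← Real.rpow_add_one (abs_ne_zero.2 hx), show s - 2 + 1 = s - 1 by ring]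
      _ ≤ |v| ^ (s - 1) * |v| := by gcongr
      _ = |v| ^ s := by
          rw [← Real.rpow_add_one ((abs_pos.2 hx).trans_le hxv).ne', sub_add_cancel]

lemma abs_add_rpow_le_of_abs_le {s x v : ℝ} (h1 : 1 ≤ s) (h2 : s ≤ 2) (hx : x ≠ 0)
    (hvx : |v| ≤ |x|) :
    |x + v| ^ s ≤ |x| ^ s + s * (|x| ^ (s - 2) * x) * v + |v| ^ s := by
  have hx2 : 0 < x ^ 2 := by positivity
  set t := (2 * x * v + v ^ 2) / x ^ 2 with ht
  have hsq : (x + v) ^ 2 = x ^ 2 * (1 + t) := by rw [ht]; field_simp; ring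
  have ht1 : 0 ≤ 1 + t := by
    rw [show 1 + t = (x + v) ^ 2 / x ^ 2 by rw [hsq]; field_simp]
    positivity
  have hpow (y : ℝ) : (y ^ 2) ^ (s / 2) = |y| ^ s := by
    rw [← sq_abs, ← Real.rpow_natCast_mul (abs_nonneg y)]
    congr 1
    push_cast
    ring
  have hv : |x| ^ (s - 2) * v ^ 2 ≤ |v| ^ s := by
    rcases eq_or_ne v 0 with rfl | hv
    · simp only [ne_eq, OfNat.ofNat_ne_zero, not_false_eq_true, zero_pow, mul_zero]; positivity
    · rw [← abs_rpow_sub_two_mul_sq s hv]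
      gcongr 1
      exact Real.rpow_le_rpow_of_nonpos (abs_pos.2 hv) hvx (by linarith)
  calc |x + v| ^ s = |x| ^ s * (1 + t) ^ (s / 2) := by
        rw [← hpow, hsq, Real.mul_rpow hx2.le ht1, hpow]
    _ ≤ |x| ^ s * (1 + s / 2 * t) := by
        gcongr
        exact rpow_one_add_le_one_add_mul_self (by linarith) (by linarith) (by linarith)
    _ = |x| ^ s + s * (|x| ^ (s - 2) * x) * v + s / 2 * (|x| ^ (s - 2) * v ^ 2) := by
        rw [← abs_rpow_sub_two_mul_sq s hx, ht]; field_simp; ring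
    _ ≤ _ := by nlinarith [show 0 ≤ |x| ^ (s - 2) * v ^ 2 by positivity]

lemma abs_add_rpow_le {s : ℝ} (h1 : 1 ≤ s) (h2 : s ≤ 2) (x v : ℝ) :
    |x + v| ^ s ≤ |x| ^ s + s * (|x| ^ (s - 2) * x) * v + 6 * |v| ^ s := by
  rcases le_or_gt |v| |x| with hvx | hvx
  · rcases eq_or_ne x 0 with rfl | hx
    · obtain rfl : v = 0 := by simpa using hvx
      simp [Real.zero_rpow (by linarith : s ≠ 0)]
    · linarith [abs_add_rpow_le_of_abs_le h1 h2 hx hvx, Real.rpow_nonneg (abs_nonneg v) s]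
  · have hv : 0 < |v| := (abs_nonneg x).trans_lt hvx
    have hsum : |x + v| ^ s ≤ 4 * |v| ^ s := by
      calc |x + v| ^ s ≤ (2 * |v|) ^ s :=
            Real.rpow_le_rpow (abs_nonneg _) (by linarith [abs_add_le x v]) (by linarith)
        _ = 2 ^ s * |v| ^ s := Real.mul_rpow zero_le_two hv.le
        _ ≤ 2 ^ (2 : ℝ) * |v| ^ s := by gcongr; norm_num
        _ = 4 * |v| ^ s := by norm_num
    have hlin : |(|x| ^ (s - 2) * x) * v| ≤ |v| ^ s := by
      rw [abs_mul, abs_mul, abs_of_nonneg (Real.rpow_nonneg (abs_nonneg x) _)]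
      exact abs_rpow_sub_two_mul_le h1 hvx.le
    have := Real.rpow_nonneg (abs_nonneg x) s
    nlinarith [neg_abs_le ((|x| ^ (s - 2) * x) * v), Real.rpow_nonneg (abs_nonneg v) s]

lemma abs_sum_mul_le_of_monotone {x v : ℕ → ℝ} {C : ℝ} (hx : ∀ n, |∑ k ∈ range n, x k| ≤ C)
    (hv : Monotone v) (hv0 : ∀ n, 0 ≤ v n) (n : ℕ) :
    |∑ k ∈ range n, v k * x k| ≤ 2 * C * v n := by
  have hC : 0 ≤ C := (abs_nonneg _).trans (hx 0)
  have hparts : |v n * ∑ k ∈ range n, x k - ∑ k ∈ range n, v k * x k| ≤ C * (v n - v 0) := by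
    induction n with
    | zero => simp
    | succ n ih =>
      have hstep : v (n + 1) * ∑ k ∈ range (n + 1), x k - ∑ k ∈ range (n + 1), v k * x k =
          (v (n + 1) - v n) * ∑ k ∈ range (n + 1), x k +
            (v n * ∑ k ∈ range n, x k - ∑ k ∈ range n, v k * x k) := by
        simp only [sum_range_succ]; ring
      have hmono : 0 ≤ v (n + 1) - v n := sub_nonneg.2 (hv n.le_succ)
      calc _ ≤ (v (n + 1) - v n) * C + C * (v n - v 0) := by
            rw [hstep]
            refine (abs_add_le _ _).trans (add_le_add ?_ ih)
            rw [abs_mul, abs_of_nonneg hmono]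
            exact mul_le_mul_of_nonneg_left (hx _) hmono
        _ = C * (v (n + 1) - v 0) := by ring
  have hend : |v n * ∑ k ∈ range n, x k| ≤ C * v n := by
    rw [abs_mul, abs_of_nonneg (hv0 n), mul_comm]
    exact mul_le_mul_of_nonneg_right (hx n) (hv0 n)
  have h0 := mul_nonneg hC (hv0 0)
  rw [abs_le] at *
  constructor <;> linarith

variable {Ω : Type*} {m0 : MeasurableSpace Ω} {μ : Measure Ω} {F : Filtration ℕ m0}

/-- A noise `η n`, revealed at time `n + 1`, whose conditional absolute moments of order `s` given
`F n` are almost surely bounded in `n`. -/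
structure HasBddCondMoment (F : Filtration ℕ m0) (μ : Measure Ω) (s : ℝ) (η : ℕ → Ω → ℝ) :
    Prop where
  adapted : ∀ n, StronglyMeasurable[F (n + 1)] (η n)
  integrable_rpow : ∀ n, Integrable (fun ω => |η n ω| ^ s) μ
  ae_bdd : ∀ᵐ ω ∂μ, ∃ C : ℝ, ∀ n, (μ[fun ω => |η n ω| ^ s | F n]) ω ≤ C

lemma abs_le_one_add_rpow {s : ℝ} (hs : 1 ≤ s) (x : ℝ) : |x| ≤ 1 + |x| ^ s := by
  rcases le_or_gt |x| 1 with h | h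
  · linarith [Real.rpow_nonneg (abs_nonneg x) s]
  · linarith [Real.self_le_rpow_of_one_le h.le hs]

namespace HasBddCondMoment

variable [IsProbabilityMeasure μ] {s a : ℝ} {η e : ℕ → Ω → ℝ}

lemma ae_bdd_condExp_of_le (he : HasBddCondMoment F μ a e) {f : ℕ → Ω → ℝ} {C : ℝ} (hC : 0 ≤ C)
    (hf : ∀ n, Integrable (f n) μ) (hle : ∀ n ω, f n ω ≤ C * (1 + |e n ω| ^ a)) :
    ∀ᵐ ω ∂μ, ∃ K : ℝ, ∀ n, (μ[f n | F n]) ω ≤ K := by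
  have hcond (n : ℕ) : μ[f n | F n] ≤ᵐ[μ]
      C • ((fun _ => (1 : ℝ)) + μ[fun ω => |e n ω| ^ a | F n]) := by
    have h1 := integrable_const (μ := μ) (1 : ℝ)
    have hadd := condExp_add h1 (he.integrable_rpow n) (F n)
    rw [condExp_const (F.le n)] at hadd
    exact (condExp_mono (hf n) ((h1.add (he.integrable_rpow n)).smul C)
      (ae_of_all _ (hle n))).trans ((condExp_smul C _ (F n)).trans (hadd.const_smul C)).le
  filter_upwards [ae_all_iff.2 hcond, he.ae_bdd] with ω hω ⟨K, hK⟩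
  exact ⟨C * (1 + K), fun n => (hω n).trans
    (mul_le_mul_of_nonneg_left (add_le_add_right (hK n) 1) hC)⟩

lemma of_abs_rpow_le (he : HasBddCondMoment F μ a e)
    (hη : ∀ n, StronglyMeasurable[F (n + 1)] (η n)) {C : ℝ} (hs : 0 ≤ s) (hC : 0 ≤ C)
    (hle : ∀ n ω, |η n ω| ^ s ≤ C * (1 + |e n ω| ^ a)) : HasBddCondMoment F μ s η := by
  have hint (n : ℕ) : Integrable (fun ω => |η n ω| ^ s) μ := by
    have hcont : Continuous fun x : ℝ => |x| ^ s := continuous_abs.rpow_const fun _ => Or.inr hs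
    refine (((integrable_const 1).add (he.integrable_rpow n)).const_mul C).mono'
      (hcont.comp_stronglyMeasurable ((hη n).mono (F.le _))).aestronglyMeasurable
      (ae_of_all _ fun ω => ?_)
    rw [Real.norm_of_nonneg (Real.rpow_nonneg (abs_nonneg _) _)]
    exact hle n ω
  exact ⟨hη, hint, he.ae_bdd_condExp_of_le hC hint hle⟩

lemma integrable (h : HasBddCondMoment F μ s η) (hs : 1 ≤ s) (n : ℕ) : Integrable (η n) μ :=
  ((integrable_const 1).add (h.integrable_rpow n)).mono'
    ((h.adapted n).mono (F.le _)).aestronglyMeasurable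
    (ae_of_all _ fun ω => abs_le_one_add_rpow hs (η n ω))

lemma ae_bdd_condExp (h : HasBddCondMoment F μ s η) (hs : 1 ≤ s) :
    ∀ᵐ ω ∂μ, ∃ K : ℝ, ∀ n, |(μ[η n | F n]) ω| ≤ K := by
  have hbdd := h.ae_bdd_condExp_of_le zero_le_one (fun n => (h.integrable hs n).norm)
    fun n ω => (abs_le_one_add_rpow hs (η n ω)).trans (one_mul _).ge
  filter_upwards [hbdd, ae_all_iff.2 fun n => norm_condExp_le (m := F n) (η n)] with ω ⟨K, hK⟩ hω
  exact ⟨K, fun n => (hω n).trans (hK n)⟩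

end HasBddCondMoment

variable [IsProbabilityMeasure μ] {s : ℝ} {η c : ℕ → Ω → ℝ}

lemma HasBddCondMoment.isLocalCondExp_add_mul (hη : HasBddCondMoment F μ s η) (hs : 1 ≤ s) {n : ℕ}
    {l r : Ω → ℝ} (hl : StronglyMeasurable[F n] l) (hr : StronglyMeasurable[F n] r) :
    StronglyMeasurable[F (n + 1)] (l * (η n - μ[η n | F n]) +
      r * ((fun ω => |η n ω| ^ s) + fun ω => |(μ[η n | F n]) ω| ^ s)) ∧
    IsLocalCondExp μ (F n) (l * (η n - μ[η n | F n]) +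
        r * ((fun ω => |η n ω| ^ s) + fun ω => |(μ[η n | F n]) ω| ^ s))
      (l * 0 + r * (μ[fun ω => |η n ω| ^ s | F n] + fun ω => |(μ[η n | F n]) ω| ^ s)) := by
  have hpow : Continuous fun x : ℝ => |x| ^ s :=
    continuous_abs.rpow_const fun _ => Or.inr (by linarith)
  have hF := F.mono n.le_succ
  have hb : StronglyMeasurable[F n] (μ[η n | F n]) := stronglyMeasurable_condExp
  have hb' : StronglyMeasurable[F n] fun ω => |(μ[η n | F n]) ω| ^ s :=
    hpow.comp_stronglyMeasurable hb
  have hlin := (IsLocalCondExp.of_integrable (hη.integrable hs n) hb EventuallyEq.rfl).sub_self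
    (F.le n)
  have hrem := (IsLocalCondExp.of_integrable (hη.integrable_rpow n)
    (stronglyMeasurable_condExp (m := F n)) EventuallyEq.rfl).add (F.le n)
    (.of_stronglyMeasurable (F.le n) hb')
  exact ⟨((hl.mono hF).mul ((hη.adapted n).sub (hb.mono hF))).add
      ((hr.mono hF).mul ((hpow.comp_stronglyMeasurable (hη.adapted n)).add (hb'.mono hF))),
    (hlin.mul_left (F.le n) hl).add (F.le n) (hrem.mul_left (F.le n) hr)⟩

lemma HasBddCondMoment.ae_bddAbove_abs_sum (hη : HasBddCondMoment F μ s η) (h1 : 1 ≤ s)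
    (h2 : s ≤ 2) (hc : ∀ n, StronglyMeasurable[F n] (c n))
    (hsum : ∀ᵐ ω ∂μ, Summable fun n => |c n ω| ^ s) :
    ∀ᵐ ω ∂μ, BddAbove (Set.range fun n =>
      |∑ k ∈ range n, c k ω * (η k ω - (μ[η k | F k]) ω)|) := by
  set b : ℕ → Ω → ℝ := fun n => μ[η n | F n]
  set X : ℕ → Ω → ℝ := fun n ω => ∑ k ∈ range n, c k ω * (η k ω - b k ω)
  set l : ℕ → Ω → ℝ := fun n ω => s * (|X n ω| ^ (s - 2) * X n ω) * c n ω
  set r : ℕ → Ω → ℝ := fun n ω => 6 * 2 ^ s * |c n ω| ^ s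
  have hpow : Continuous fun x : ℝ => |x| ^ s :=
    continuous_abs.rpow_const fun _ => Or.inr (by linarith)
  have hslope : Measurable fun x : ℝ => s * (|x| ^ (s - 2) * x) := by fun_prop
  have hXm (n : ℕ) : StronglyMeasurable[F n] (X n) :=
    Finset.stronglyMeasurable_fun_sum _ fun k hk => ((hc k).mono (F.mono (mem_range.1 hk).le)).mul
      (((hη.adapted k).sub (stronglyMeasurable_condExp.mono (F.mono k.le_succ))).mono
        (F.mono (mem_range.1 hk)))
  have hV (n : ℕ) := hη.isLocalCondExp_add_mul h1
    (((hslope.comp (hXm n).measurable).stronglyMeasurable).mul (hc n) :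
      StronglyMeasurable[F n] (l n))
    (stronglyMeasurable_const.mul (hpow.comp_stronglyMeasurable (hc n)) :
      StronglyMeasurable[F n] (r n))
  have hrec (n : ℕ) (ω : Ω) : |X (n + 1) ω| ^ s ≤ |X n ω| ^ s +
      (l n * (η n - b n) + r n * ((fun ω => |η n ω| ^ s) + fun ω => |b n ω| ^ s)) ω := by
    have hexp := abs_add_rpow_le h1 h2 (X n ω) (c n ω * (η n ω - b n ω))
    have hdiff := mul_le_mul_of_nonneg_left (abs_sub_rpow_le (by linarith : 0 ≤ s) (η n ω) (b n ω))
      (Real.rpow_nonneg (abs_nonneg (c n ω)) s)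
    rw [abs_mul, Real.mul_rpow (abs_nonneg _) (abs_nonneg _)] at hexp
    simp only [X, l, r, sum_range_succ, Pi.add_apply, Pi.mul_apply, Pi.sub_apply] at hexp ⊢
    linarith
  have hD : ∀ᵐ ω ∂μ, ∃ v : ℕ → ℝ, Summable v ∧ (∀ n, 0 ≤ v n) ∧ ∀ n,
      (l n * 0 + r n * (μ[fun ω => |η n ω| ^ s | F n] + fun ω => |b n ω| ^ s)) ω + 0 ≤ v n := by
    filter_upwards [hsum, hη.ae_bdd, hη.ae_bdd_condExp h1] with ω hsum ⟨K, hK⟩ ⟨K', hK'⟩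
    have hK0 : 0 ≤ K' := (abs_nonneg _).trans (hK' 0)
    refine ⟨fun n => 6 * 2 ^ s * |c n ω| ^ s * (max K 0 + K' ^ s),
      (hsum.mul_left _).mul_right _, fun n => by positivity, fun n => ?_⟩
    simp only [Pi.add_apply, Pi.mul_apply, Pi.zero_apply, mul_zero, zero_add, add_zero, r]
    gcongr
    · exact (hK n).trans (le_max_left _ _)
    · exact hK' n
  filter_upwards [robbins_siegmund (Y := fun n ω => |X n ω| ^ s) (w := 0)
    (hpow.comp_stronglyMeasurable (hXm 0)) (fun n => (hV n).1) (fun n => (hV n).2)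
    (fun n ω => by positivity) (fun _ _ => le_rfl) hrec hD] with ω ⟨⟨B, hB⟩, _⟩
  refine ⟨1 + B, ?_⟩
  rintro _ ⟨n, rfl⟩
  exact (abs_le_one_add_rpow h1 _).trans (add_le_add_right (hB ⟨n, rfl⟩) 1)

lemma isLittleO_rpow_self {γ : ℝ} (hγ : γ < 1) : (fun x : ℝ => x ^ γ) =o[atTop] fun x => x := by
  refine (Asymptotics.isLittleO_iff_tendsto' ?_).2 ?_
  · filter_upwards [eventually_gt_atTop 0] with x hx h0
    exact absurd h0 hx.ne'
  · refine (tendsto_rpow_neg_atTop (sub_pos.2 hγ)).congr' ?_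
    filter_upwards [eventually_gt_atTop 0] with x hx
    rw [neg_sub, Real.rpow_sub_one hx.ne']

theorem HasBddCondMoment.ae_isLittleO_sum {N : ℕ → Ω → ℝ} {γ : ℝ} (hη : HasBddCondMoment F μ s η)
    (h1 : 1 ≤ s) (h2 : s ≤ 2) (hc : ∀ n, StronglyMeasurable[F n] (c n))
    (hN : ∀ n, StronglyMeasurable[F n] (N n)) (hN1 : ∀ n ω, 1 ≤ N n ω)
    (hNmono : ∀ ω, Monotone fun n => N n ω)
    (hNtop : ∀ᵐ ω ∂μ, Tendsto (fun n => N n ω) atTop atTop) (hγ0 : 0 ≤ γ) (hγ1 : γ < 1)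
    (hsum : ∀ᵐ ω ∂μ, Summable fun n => (|c n ω| / N n ω ^ γ) ^ s) :
    ∀ᵐ ω ∂μ, (fun n => ∑ k ∈ range n, c k ω * (η k ω - (μ[η k | F k]) ω)) =o[atTop]
      fun n => N n ω := by
  have hpos (n : ℕ) (ω : Ω) : 0 < N n ω ^ γ := Real.rpow_pos_of_pos (one_pos.trans_le (hN1 n ω)) γ
  have hbdd := hη.ae_bddAbove_abs_sum h1 h2 (c := fun n ω => c n ω / N n ω ^ γ)
    (fun n => ((hc n).measurable.div ((hN n).measurable.pow_const γ)).stronglyMeasurable)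
    (by simpa only [abs_div, abs_of_pos (hpos _ _)] using hsum)
  filter_upwards [hbdd, hNtop] with ω ⟨C, hC⟩ hNtop
  have hO : (fun n => ∑ k ∈ range n, c k ω * (η k ω - (μ[η k | F k]) ω)) =O[atTop]
      fun n => N n ω ^ γ := by
    refine .of_bound (2 * C) (Eventually.of_forall fun n => ?_)
    rw [Real.norm_eq_abs, Real.norm_of_nonneg (hpos n ω).le]
    have habel := abs_sum_mul_le_of_monotone (fun n => hC ⟨n, rfl⟩)
      (fun i j hij => Real.rpow_le_rpow (zero_le_one.trans (hN1 i ω)) (hNmono ω hij) hγ0)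
      (fun n => (hpos n ω).le) n
    refine le_of_eq_of_le (congrArg _ (sum_congr rfl fun k _ => ?_)) habel
    have := (hpos k ω).ne'
    field_simp
  exact hO.trans_isLittleO ((isLittleO_rpow_self hγ1).comp_tendsto hNtop)

end MartingaleTransform

/-! ### Elementary inequalities -/

section RealInequalities

lemma rpow_le_rpow_add_mul_sub {q x y : ℝ} (hq : 1 ≤ q) (hx : 0 ≤ x) (hy : 0 ≤ y) :
    y ^ q ≤ x ^ q + q * y ^ (q - 1) * (y - x) := by
  rcases hy.eq_or_lt with rfl | hy
  · rcases hq.eq_or_lt with rfl | hq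
    · simp
    · rw [Real.zero_rpow (by linarith), Real.zero_rpow (by linarith)]
      simpa using Real.rpow_nonneg hx q
  · have hbern := one_add_mul_self_le_rpow_one_add
      (by linarith [div_nonneg hx hy.le] : -1 ≤ x / y - 1) hq
    rw [add_sub_cancel, Real.div_rpow hx hy.le, le_div_iff₀ (Real.rpow_pos_of_pos hy q)] at hbern
    have hsplit : y ^ q = y ^ (q - 1) * y := by rw [← Real.rpow_add_one hy.ne', sub_add_cancel]
    have : (1 + q * (x / y - 1)) * y ^ q = y ^ q - q * y ^ (q - 1) * (y - x) := by
      rw [hsplit]; field_simp; ring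
    linarith

lemma rpow_sub_rpow_mul_sub_mul_max_le {r x y : ℝ} (hx : 0 ≤ x) (hy : 0 ≤ y) :
    (y ^ r - x ^ r) * (y - x) * max x y ≤ max 1 r * max x y ^ r * (y - x) ^ 2 := by
  wlog hxy : x ≤ y generalizing x y
  · have := this hy hx (le_of_not_ge hxy)
    rw [max_comm] at this
    linarith
  rw [max_eq_right hxy]
  rcases hy.eq_or_lt with rfl | hy
  · obtain rfl : x = 0 := le_antisymm hxy hx
    simp
  set t := x / y with ht
  have hxt : x = t * y := by rw [ht]; field_simp
  have ht0 : 0 ≤ t := div_nonneg hx hy.le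
  have ht1 : t ≤ 1 := (div_le_one hy).2 hxy
  have hbern : 1 - t ^ r ≤ max 1 r * (1 - t) := by
    rcases le_total 1 r with h | h
    · have := one_add_mul_self_le_rpow_one_add (by linarith : -1 ≤ t - 1) h
      rw [add_sub_cancel] at this
      rw [max_eq_right h]
      linarith
    · have : t ^ (1 : ℝ) ≤ t ^ r := Real.rpow_le_rpow_of_exponent_ge_of_imp ht0 ht1 h (by
        intro _ h; norm_num at h)
      rw [max_eq_left h]
      rw [Real.rpow_one] at this
      linarith
  have hyr : 0 ≤ y ^ r * (1 - t) * y ^ 2 := by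
    have := Real.rpow_nonneg hy.le r
    have : 0 ≤ 1 - t := by linarith
    positivity
  rw [hxt, Real.mul_rpow ht0 hy.le]
  nlinarith [mul_le_mul_of_nonneg_left hbern hyr]

lemma two_mul_add_sq_le {x g h : ℝ} (hx : 0 ≤ x) (hh : 0 ≤ h) (hg : g ^ 2 ≤ h * x) :
    (2 * g + h) ^ 2 ≤ 16 * h * max x (x + 2 * g + h) := by
  rcases le_or_gt h (4 * x) with hhx | hhx
  · nlinarith [mul_le_mul_of_nonneg_left (le_max_left x (x + 2 * g + h)) hh, sq_nonneg (2 * g - h)]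
  · have := abs_le_of_sq_le_sq (by nlinarith : g ^ 2 ≤ (h / 2) ^ 2) (by linarith)
    rw [abs_le] at this
    nlinarith [mul_le_mul_of_nonneg_left (le_max_right x (x + 2 * g + h)) hh]

lemma add_two_mul_add_nonneg {x g h : ℝ} (hx : 0 ≤ x) (hh : 0 ≤ h) (hg : g ^ 2 ≤ h * x) :
    0 ≤ x + 2 * g + h := by
  nlinarith [abs_le_of_sq_le_sq (by nlinarith [sq_nonneg (x - h)] : g ^ 2 ≤ ((x + h) / 2) ^ 2)
    (by linarith), neg_abs_le g]

lemma add_two_mul_add_le {x g h : ℝ} (hx : 0 ≤ x) (hh : 0 ≤ h) (hg : g ^ 2 ≤ h * x) :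
    x + 2 * g + h ≤ 2 * (x + h) := by
  nlinarith [abs_le_of_sq_le_sq (by nlinarith [sq_nonneg (x - h)] : g ^ 2 ≤ ((x + h) / 2) ^ 2)
    (by linarith), le_abs_self g]

lemma exists_add_two_mul_add_rpow_le {q : ℝ} (hq : 1 ≤ q) :
    ∃ C : ℝ, 0 ≤ C ∧ ∀ x g h : ℝ, 0 ≤ x → 0 ≤ h → g ^ 2 ≤ h * x →
      (x + 2 * g + h) ^ q ≤ x ^ q + 2 * q * x ^ (q - 1) * g + C * h * (x + h) ^ (q - 1) := by
  refine ⟨q * (1 + max 1 (q - 1) * 16 * 2 ^ (q - 1)), by positivity, fun x g h hx hh hg => ?_⟩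
  set y := x + 2 * g + h with hy
  have hq0 : 0 ≤ q - 1 := by linarith
  have hy0 : 0 ≤ y := add_two_mul_add_nonneg hx hh hg
  have hmax : max x y ≤ 2 * (x + h) := max_le (by linarith) (add_two_mul_add_le hx hh hg)
  have hmax0 : 0 ≤ max x y := hx.trans (le_max_left _ _)
  have hcross : (y ^ (q - 1) - x ^ (q - 1)) * (y - x) ≤
      max 1 (q - 1) * 16 * h * max x y ^ (q - 1) := by
    rcases hmax0.eq_or_lt with h0 | h0
    · have hx' : x = 0 := le_antisymm (h0 ▸ le_max_left x y) hx
      have hy' : y = 0 := le_antisymm (h0 ▸ le_max_right x y) hy0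
      rw [hx', hy', sub_self, sub_self, mul_zero]
      positivity
    · refine le_of_mul_le_mul_right ?_ h0
      have hsq : (y - x) ^ 2 ≤ 16 * h * max x y := by
        rw [show y - x = 2 * g + h by rw [hy]; ring]
        exact two_mul_add_sq_le hx hh hg
      calc _ ≤ max 1 (q - 1) * max x y ^ (q - 1) * (y - x) ^ 2 :=
            rpow_sub_rpow_mul_sub_mul_max_le hx hy0
        _ ≤ max 1 (q - 1) * max x y ^ (q - 1) * (16 * h * max x y) := by gcongr
        _ = _ := by ring
  have hxpow : x ^ (q - 1) ≤ (x + h) ^ (q - 1) := Real.rpow_le_rpow hx (by linarith) hq0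
  have hmaxpow : max x y ^ (q - 1) ≤ 2 ^ (q - 1) * (x + h) ^ (q - 1) := by
    rw [← Real.mul_rpow zero_le_two (by linarith)]
    exact Real.rpow_le_rpow hmax0 hmax hq0
  calc y ^ q ≤ x ^ q + q * y ^ (q - 1) * (y - x) := rpow_le_rpow_add_mul_sub hq hx hy0
    _ = x ^ q + 2 * q * x ^ (q - 1) * g +
        q * (h * x ^ (q - 1) + (y ^ (q - 1) - x ^ (q - 1)) * (y - x)) := by rw [hy]; ring
    _ ≤ x ^ q + 2 * q * x ^ (q - 1) * g + q * (h * (x + h) ^ (q - 1) +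
        max 1 (q - 1) * 16 * h * (2 ^ (q - 1) * (x + h) ^ (q - 1))) := by
      have := hcross.trans (mul_le_mul_of_nonneg_left hmaxpow
        (by positivity : 0 ≤ max 1 (q - 1) * 16 * h))
      gcongr _ + q * (?_ + ?_)
      exact mul_le_mul_of_nonneg_left hxpow hh
    _ = _ := by ring

lemma exists_mul_rpow_sub_one_le {c q K : ℝ} (hc : 0 < c) (hq : 1 ≤ q) (hK : 0 ≤ K) :
    ∃ B : ℝ, 0 ≤ B ∧ ∀ z : ℝ, 1 ≤ z → K * z ^ (q - 1) ≤ c * z ^ q + B := by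
  refine ⟨K * (1 + K / c) ^ (q - 1), by positivity, fun z hz => ?_⟩
  have hz0 : 0 < z := by linarith
  rcases le_total z (1 + K / c) with h | h
  · have : z ^ (q - 1) ≤ (1 + K / c) ^ (q - 1) := Real.rpow_le_rpow hz0.le h (by linarith)
    have := mul_le_mul_of_nonneg_left this hK
    have : 0 ≤ c * z ^ q := by positivity
    linarith
  · have hKz : K ≤ c * z := by
      have : K / c ≤ z := by linarith
      rwa [div_le_iff₀ hc, mul_comm] at this
    calc K * z ^ (q - 1) ≤ c * z * z ^ (q - 1) := by gcongr
      _ = c * z ^ q := by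
        rw [mul_assoc, mul_comm z, ← Real.rpow_add_one hz0.ne', sub_add_cancel]
      _ ≤ _ := le_add_of_nonneg_right (by positivity)

lemma exists_drift_le {c q C K : ℝ} (hc : 0 < c) (hq : 1 ≤ q) (hC : 0 ≤ C) (hK : 0 ≤ K) :
    ∃ B : ℝ, 0 ≤ B ∧ ∀ u z t : ℝ, 0 ≤ u → 1 ≤ z → t ≤ K →
      c * (u * (z ^ (q - 1) - z ^ q)) + C * (u * z ^ (q - 1)) * t + c / 2 * (u * z ^ q) ≤
        B * u := by
  obtain ⟨B, hB, habsorb⟩ := exists_mul_rpow_sub_one_le (half_pos hc) hq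
    (by positivity : 0 ≤ c + C * K)
  refine ⟨B, hB, fun u z t hu hz ht => ?_⟩
  calc _ ≤ c * (u * (z ^ (q - 1) - z ^ q)) + C * (u * z ^ (q - 1)) * K + c / 2 * (u * z ^ q) := by
        gcongr
    _ = ((c + C * K) * z ^ (q - 1) - c / 2 * z ^ q) * u := by ring
    _ ≤ B * u := by
        gcongr
        linarith [habsorb z hz]

/-- The running total `1 + ∑_{k ≤ n} h_k`, used as an intrinsic clock. -/
def clock (h : ℕ → ℝ) (n : ℕ) : ℝ := 1 + ∑ k ∈ range (n + 1), h k

lemma one_le_clock {h : ℕ → ℝ} (hh : ∀ n, 0 ≤ h n) (n : ℕ) : 1 ≤ clock h n :=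
  le_add_of_nonneg_right (sum_nonneg fun k _ => hh k)

lemma clock_succ (h : ℕ → ℝ) (n : ℕ) : clock h (n + 1) = clock h n + h (n + 1) := by
  rw [clock, sum_range_succ, ← add_assoc, clock]

lemma monotone_clock {h : ℕ → ℝ} (hh : ∀ n, 0 ≤ h n) : Monotone (clock h) :=
  monotone_nat_of_le_succ fun n => by rw [clock_succ]; exact le_add_of_nonneg_right (hh _)

lemma summable_div_clock_rpow {h : ℕ → ℝ} (hh : ∀ n, 0 ≤ h n) {r : ℝ} (hr : 1 < r) :
    Summable fun n => h n / clock h n ^ r := by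
  have hpos (n : ℕ) : 0 < clock h n := one_pos.trans_le (one_le_clock hh n)
  have hδ : 0 < r - 1 := sub_pos.2 hr
  have hstep (n : ℕ) : (r - 1) * (h (n + 1) / clock h (n + 1) ^ r) ≤
      clock h n ^ (-(r - 1)) - clock h (n + 1) ^ (-(r - 1)) := by
    set t := clock h n / clock h (n + 1) with ht
    have ht0 : 0 < t := div_pos (hpos n) (hpos _)
    have hlog : 1 + (r - 1) * (1 - t) ≤ t ^ (-(r - 1)) := by
      rw [Real.rpow_def_of_pos ht0]
      have := Real.add_one_le_exp (Real.log t * -(r - 1))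
      nlinarith [Real.log_le_sub_one_of_pos ht0]
    have hht : h (n + 1) = clock h (n + 1) * (1 - t) := by
      rw [ht, mul_sub, mul_one, mul_div_cancel₀ _ (hpos _).ne', clock_succ]; ring
    have hr' : clock h (n + 1) ^ r = clock h (n + 1) * clock h (n + 1) ^ (r - 1) := by
      rw [mul_comm, ← Real.rpow_add_one (hpos _).ne', sub_add_cancel]
    have hn : clock h n ^ (-(r - 1)) = t ^ (-(r - 1)) * clock h (n + 1) ^ (-(r - 1)) := by
      rw [← Real.mul_rpow ht0.le (hpos _).le, ht, div_mul_cancel₀ _ (hpos _).ne']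
    have hcancel : h (n + 1) / clock h (n + 1) ^ r = (1 - t) * clock h (n + 1) ^ (-(r - 1)) := by
      rw [hr', Real.rpow_neg (hpos _).le, hht]
      have := (hpos (n + 1)).ne'
      field_simp
    rw [hcancel, hn]
    nlinarith [Real.rpow_pos_of_pos (hpos (n + 1)) (-(r - 1))]
  refine (summable_nat_add_iff 1).1 (summable_of_sum_range_le
    (c := clock h 0 ^ (-(r - 1)) / (r - 1))
    (fun n => div_nonneg (hh _) (Real.rpow_nonneg (hpos _).le _)) fun n => ?_)
  rw [le_div_iff₀' hδ, mul_sum]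
  refine (sum_le_sum fun k _ => hstep k).trans ?_
  rw [sum_range_sub']
  exact sub_le_self _ (Real.rpow_nonneg (hpos _).le _)

lemma div_clock_rpow_le {h : ℕ → ℝ} (hh : ∀ n, 0 ≤ h n) {r y : ℝ} (hr : 0 ≤ r) (hy : 0 ≤ y)
    (n : ℕ) : y / clock h n ^ r ≤ y / (1 + ∑ k ∈ range n, h k) ^ r := by
  have := sum_nonneg fun k (_ : k ∈ range n) => hh k
  rw [clock, sum_range_succ]
  gcongr
  exact le_add_of_nonneg_right (hh n)

end RealInequalities

lemma exists_abs_add_pow_sub_le (T : ℝ) (hT : 0 ≤ T) (j : ℕ) :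
    ∃ C : ℝ, 0 ≤ C ∧ ∀ x v t X : ℝ, |x| ≤ X → 0 ≤ t → t ≤ T → |v| ≤ t * X →
      |(x + v) ^ (j + 1) - x ^ (j + 1) - (j + 1) * x ^ j * v -
        (j + 1) * j / 2 * x ^ (j - 1) * v ^ 2| ≤ C * t ^ 3 * X ^ (j + 1) := by
  induction j with
  | zero => exact ⟨0, le_rfl, fun x v t X _ _ _ _ => by simp⟩
  | succ j ih =>
    obtain ⟨C, hC, hexp⟩ := ih
    refine ⟨(1 + T) * C + (j + 1) * j / 2, by positivity, fun x v t X hx ht htT hv => ?_⟩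
    have hX : 0 ≤ X := (abs_nonneg x).trans hx
    have hxv : |x + v| ≤ (1 + T) * X := by
      linarith [abs_add_le x v, mul_le_mul_of_nonneg_right htT hX]
    have hcube : |(j + 1) * j / 2 * (x ^ (j - 1) * v ^ 3)| ≤
        (j + 1) * j / 2 * (t ^ 3 * X ^ (j + 2)) := by
      rw [abs_mul, abs_of_nonneg (by positivity)]
      rcases j with _ | i
      · simp
      · gcongr
        calc _ = |x| ^ i * |v| ^ 3 := by rw [abs_mul, abs_pow, abs_pow, Nat.add_sub_cancel]
          _ ≤ X ^ i * (t * X) ^ 3 := by gcongr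
          _ = _ := by ring
    have hrec : (x + v) ^ (j + 2) - x ^ (j + 2) - (↑(j + 1) + 1) * x ^ (j + 1) * v -
        (↑(j + 1) + 1) * ↑(j + 1) / 2 * x ^ j * v ^ 2 =
        (x + v) * ((x + v) ^ (j + 1) - x ^ (j + 1) - (j + 1) * x ^ j * v -
          (j + 1) * j / 2 * x ^ (j - 1) * v ^ 2) + (j + 1) * j / 2 * (x ^ (j - 1) * v ^ 3) := by
      rcases j with _ | i
      · push_cast; ring
      · rw [Nat.add_sub_cancel]; push_cast; ring
    rw [Nat.add_sub_cancel, hrec]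
    calc _ ≤ (1 + T) * X * (C * t ^ 3 * X ^ (j + 1)) +
          (j + 1) * j / 2 * (t ^ 3 * X ^ (j + 2)) := by
            refine (abs_add_le _ _).trans (add_le_add ?_ hcube)
            rw [abs_mul]
            exact mul_le_mul hxv (hexp x v t X hx ht htT hv) (abs_nonneg _) (by positivity)
      _ = _ := by ring

/-- The coefficient of `e ^ 2` in the expansion of `(x + 2 * g * e + k * e ^ 2) ^ (j + 1)`, as a
function of `k` and of `Γ = g ^ 2`. -/
def sqCoeff (j : ℕ) (x k Γ : ℝ) : ℝ := (j + 1) * x ^ j * k + 2 * (j + 1) * j * x ^ (j - 1) * Γ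

lemma exists_abs_add_two_mul_add_pow_sub_le (T : ℝ) (hT : 0 ≤ T) (j : ℕ) :
    ∃ C : ℝ, 0 ≤ C ∧ ∀ x g k t X : ℝ, 0 ≤ x → x ≤ X → 0 ≤ k → k ≤ t ^ 2 * X → g ^ 2 ≤ k * x →
      0 ≤ t → t ≤ T →
      |(x + 2 * g + k) ^ (j + 1) - x ^ (j + 1) - 2 * (j + 1) * x ^ j * g - sqCoeff j x k (g ^ 2)|
        ≤ C * t ^ 3 * X ^ (j + 1) := by
  obtain ⟨C, hC, hexp⟩ := exists_abs_add_pow_sub_le ((2 + T) * T) (by positivity) j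
  refine ⟨C * (2 + T) ^ 3 + (j + 1) * j / 2 * (4 + T), by positivity,
    fun x g k t X hx hxX hk hkX hg ht htT => ?_⟩
  have hX : 0 ≤ X := hx.trans hxX
  have hgX : |g| ≤ t * X := by
    refine abs_le_of_sq_le_sq (hg.trans ?_) (by positivity)
    calc k * x ≤ t ^ 2 * X * X := by gcongr
      _ = _ := by ring
  have hkTX : k ≤ T * t * X := hkX.trans (by rw [sq]; gcongr)
  have hv : |2 * g + k| ≤ (2 + T) * t * X := by
    rw [abs_le] at hgX ⊢
    constructor <;> linarith [hgX.1, hgX.2]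
  have hsq : |(j + 1) * j / 2 * (x ^ (j - 1) * (k * (4 * g + k)))| ≤
      (j + 1) * j / 2 * ((4 + T) * t ^ 3 * X ^ (j + 1)) := by
    rw [abs_mul, abs_of_nonneg (by positivity)]
    rcases j with _ | i
    · simp
    · gcongr
      rw [Nat.add_sub_cancel, abs_mul, abs_of_nonneg (by positivity), abs_mul, abs_of_nonneg hk]
      calc _ ≤ X ^ i * (t ^ 2 * X * ((4 + T) * (t * X))) := by
            gcongr
            rw [abs_le] at hgX ⊢
            constructor <;> linarith [hgX.1, hgX.2]
        _ = _ := by ring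
  have hmain := hexp x (2 * g + k) ((2 + T) * t) X (by rwa [abs_of_nonneg hx]) (by positivity)
    (by gcongr) hv
  calc _ = |((x + (2 * g + k)) ^ (j + 1) - x ^ (j + 1) - (j + 1) * x ^ j * (2 * g + k) -
          (j + 1) * j / 2 * x ^ (j - 1) * (2 * g + k) ^ 2) +
          (j + 1) * j / 2 * (x ^ (j - 1) * (k * (4 * g + k)))| := by
        rw [sqCoeff]; ring_nf
    _ ≤ _ := (abs_add_le _ _).trans (add_le_add hmain hsq)
    _ = _ := by ring

section Replacement

variable {f f' g g' u v : ℕ → ℝ} {l : Filter ℕ}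

lemma mul_sub_mul_isLittleO (hf : (fun n => f n - g n) =o[l] u) (hg : g =O[l] u)
    (hf' : (fun n => f' n - g' n) =o[l] v) (hg' : g' =O[l] v) :
    (fun n => f n * f' n - g n * g' n) =o[l] fun n => u n * v n := by
  have hf'O : f' =O[l] v := by simpa using hf'.isBigO.add hg'
  exact ((hf.mul_isBigO hf'O).add (hg.mul_isLittleO hf')).congr_left fun n => by ring

lemma pow_sub_pow_isLittleO (hf : (fun n => f n - g n) =o[l] u) (hg : g =O[l] u) (i : ℕ) :
    (fun n => f n ^ i - g n ^ i) =o[l] fun n => u n ^ i := by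
  induction i with
  | zero => simp [tendsto_const_nhds]
  | succ i ih => simpa only [pow_succ] using mul_sub_mul_isLittleO ih (hg.pow i) hf hg

lemma pow_succ_sub_pow_succ_isLittleO {U x W A h Z : ℕ → ℝ} (j : ℕ)
    (hU : (fun n => U n - W n) =o[l] Z) (hx : (fun n => x n - W n) =o[l] Z) (hW : W =O[l] Z)
    (hA : (fun n => U n - x n - A n) =o[l] fun n => h n * Z n)
    (hAO : A =O[l] fun n => h n * Z n) :
    (fun n => U n ^ (j + 1) - x n ^ (j + 1) - (j + 1) * A n * W n ^ j) =o[l]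
      fun n => h n * Z n ^ (j + 1) := by
  have hgeom : (fun n => ∑ i ∈ range (j + 1), U n ^ i * x n ^ (j - i) - (j + 1) * W n ^ j) =o[l]
      fun n => Z n ^ j := by
    suffices ∀ i ∈ range (j + 1), (fun n => U n ^ i * x n ^ (j - i) - W n ^ j) =o[l]
        fun n => Z n ^ j from (Asymptotics.IsLittleO.fun_sum this).congr_left fun n => by simp
    intro i hi
    have hij : i + (j - i) = j := Nat.add_sub_of_le (Nat.lt_succ_iff.1 (mem_range.1 hi))
    simpa only [← pow_add, hij] using mul_sub_mul_isLittleO (pow_sub_pow_isLittleO hU hW i)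
      (hW.pow i) (pow_sub_pow_isLittleO hx hW (j - i)) (hW.pow (j - i))
  refine (mul_sub_mul_isLittleO hA hAO hgeom ((hW.pow j).const_mul_left _)).congr
    (fun n => ?_) fun n => by ring
  rw [mul_comm (U n - x n), ← geom_sum₂_mul]
  simp only [Nat.add_sub_cancel]
  ring

lemma sqCoeff_sub_sqCoeff_isLittleO {x W k h Γ Γ' Z : ℕ → ℝ} (j : ℕ)
    (hx : (fun n => x n - W n) =o[l] Z) (hW : W =O[l] Z) (hk : (fun n => k n - h n) =o[l] h)
    (hΓ : (fun n => Γ n - Γ' n) =o[l] fun n => h n * Z n) (hΓO : Γ' =O[l] fun n => h n * Z n) :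
    (fun n => sqCoeff j (x n) (k n) (Γ n) - sqCoeff j (W n) (h n) (Γ' n)) =o[l]
      fun n => h n * Z n ^ j := by
  have hfst := mul_sub_mul_isLittleO (pow_sub_pow_isLittleO hx hW j) (hW.pow j) hk
    (Asymptotics.isBigO_refl h l)
  rcases j with _ | i
  · simpa [sqCoeff] using hk
  · have hsnd := mul_sub_mul_isLittleO (pow_sub_pow_isLittleO hx hW i) (hW.pow i) hΓ hΓO
    refine ((hfst.const_mul_left (↑(i + 1) + 1)).congr_right fun n => mul_comm _ _).add
      ((hsnd.const_mul_left (2 * (↑(i + 1) + 1) * ↑(i + 1))).congr_right fun n => ?_) |>.congr_left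
      fun n => ?_
    · ring
    · simp only [sqCoeff, Nat.add_sub_cancel]
      ring

end Replacement

/-! ### Quadratic recursions -/

section QuadraticRecursion

variable {Ω : Type*} {m0 : MeasurableSpace Ω} {μ : Measure Ω} {F : Filtration ℕ m0}

/-- Almost sure growth control of `Q` at the speed of the clock of the step sizes `h`: it bounds the
weights for which a martingale transform is negligible with respect to the clock. -/
structure HasGrowthControl (F : Filtration ℕ m0) (μ : Measure Ω) (s γ b : ℝ)
    (h Q : ℕ → Ω → ℝ) : Prop where
  one_le_exponent : 1 ≤ s
  exponent_le_two : s ≤ 2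
  rate_nonneg : 0 ≤ γ
  rate_lt_one : γ < 1
  stronglyMeasurable : ∀ n, StronglyMeasurable[F n] (h n)
  nonneg : ∀ n ω, 0 ≤ h n ω
  le : ∀ n ω, h n ω ≤ b
  one_le : ∀ n ω, 1 ≤ Q n ω
  tendsto_clock : ∀ᵐ ω ∂μ, Tendsto (clock fun n => h n ω) atTop atTop
  summable : ∀ᵐ ω ∂μ, Summable fun n => h n ω * (Q n ω / clock (fun n => h n ω) n ^ γ) ^ s
  isBigO : ∀ᵐ ω ∂μ, (fun n => Q n ω) =O[atTop] fun n => clock (fun n => h n ω) n ^ γ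

lemma stronglyMeasurable_clock {h : ℕ → Ω → ℝ} (hh : ∀ n, StronglyMeasurable[F n] (h n)) (n : ℕ) :
    StronglyMeasurable[F n] fun ω => clock (fun n => h n ω) n :=
  stronglyMeasurable_const.add (Finset.stronglyMeasurable_fun_sum _ fun k hk =>
    (hh k).mono (F.mono (Nat.lt_succ_iff.1 (mem_range.1 hk))))

namespace HasGrowthControl

variable [IsProbabilityMeasure μ] {s s' γ b : ℝ} {h Q c η : ℕ → Ω → ℝ}

lemma ae_isLittleO_sum (H : HasGrowthControl F μ s γ b h Q) (hη : HasBddCondMoment F μ s' η)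
    (h1 : 1 ≤ s') (h2 : s' ≤ 2) (hc : ∀ n, StronglyMeasurable[F n] (c n))
    (hcO : ∀ᵐ ω ∂μ, (fun n => (|c n ω| / clock (fun n => h n ω) n ^ γ) ^ s') =O[atTop]
      fun n => h n ω * (Q n ω / clock (fun n => h n ω) n ^ γ) ^ s) :
    ∀ᵐ ω ∂μ, (fun n => ∑ k ∈ range n, c k ω * (η k ω - (μ[η k | F k]) ω)) =o[atTop]
      clock fun n => h n ω := by
  refine hη.ae_isLittleO_sum (N := fun n ω => clock (fun n => h n ω) n) h1 h2 hc
    (stronglyMeasurable_clock H.stronglyMeasurable) (fun n ω => one_le_clock (H.nonneg · ω) n)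
    (fun ω => monotone_clock (H.nonneg · ω)) H.tendsto_clock H.rate_nonneg H.rate_lt_one ?_
  filter_upwards [H.summable, hcO] with ω hsum hO
  exact summable_of_isBigO_nat hsum hO

lemma ae_isLittleO_sum_of_isBigO (H : HasGrowthControl F μ s γ b h Q)
    (hη : HasBddCondMoment F μ s η) (hc : ∀ n, StronglyMeasurable[F n] (c n))
    (hcO : ∀ᵐ ω ∂μ, (fun n => c n ω) =O[atTop] fun n => h n ω * Q n ω) :
    ∀ᵐ ω ∂μ, (fun n => ∑ k ∈ range n, c k ω * (η k ω - (μ[η k | F k]) ω)) =o[atTop]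
      clock fun n => h n ω := by
  refine H.ae_isLittleO_sum hη H.one_le_exponent H.exponent_le_two hc ?_
  filter_upwards [hcO] with ω hO
  set N : ℕ → ℝ := fun n => clock (fun n => h n ω) n ^ γ
  have hs0 : 0 ≤ s := zero_le_one.trans H.one_le_exponent
  have hN (n : ℕ) : 0 ≤ N n :=
    Real.rpow_nonneg (zero_le_one.trans (one_le_clock (H.nonneg · ω) n)) _
  have hQN (n : ℕ) : 0 ≤ Q n ω / N n := div_nonneg (zero_le_one.trans (H.one_le n ω)) (hN n)
  have hdiv : (fun n => |c n ω| / N n) =O[atTop] fun n => h n ω * (Q n ω / N n) := by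
    simpa only [div_eq_mul_inv, mul_assoc] using
      hO.abs_left.mul (Asymptotics.isBigO_refl (fun n => (N n)⁻¹) atTop)
  refine (hdiv.rpow hs0 (Eventually.of_forall fun n => mul_nonneg (H.nonneg n ω) (hQN n))).trans
    (.of_bound (b ^ (s - 1)) (Eventually.of_forall fun n => ?_))
  have hh := H.nonneg n ω
  have hpow : h n ω ^ s ≤ b ^ (s - 1) * h n ω := by
    rw [← sub_add_cancel s 1, Real.rpow_add_one' hh (by linarith [H.one_le_exponent]),
      add_sub_cancel_right]
    gcongr
    · linarith [H.one_le_exponent]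
    · exact H.le n ω
  have hQs := Real.rpow_nonneg (hQN n) s
  rw [Real.mul_rpow hh (hQN n), Real.norm_of_nonneg (by positivity),
    Real.norm_of_nonneg (by positivity), ← mul_assoc]
  gcongr

lemma ae_isLittleO_sum_of_sq_isBigO (H : HasGrowthControl F μ s γ b h Q)
    (hη : HasBddCondMoment F μ 2 η) (hc : ∀ n, StronglyMeasurable[F n] (c n))
    (hcO : ∀ᵐ ω ∂μ, (fun n => c n ω ^ 2) =O[atTop] fun n => h n ω * Q n ω ^ 2) :
    ∀ᵐ ω ∂μ, (fun n => ∑ k ∈ range n, c k ω * (η k ω - (μ[η k | F k]) ω)) =o[atTop]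
      clock fun n => h n ω := by
  refine H.ae_isLittleO_sum hη one_le_two le_rfl hc ?_
  filter_upwards [hcO, H.isBigO] with ω hO hQO
  set N : ℕ → ℝ := fun n => clock (fun n => h n ω) n ^ γ
  have hN (n : ℕ) : 0 < N n :=
    Real.rpow_pos_of_pos (one_pos.trans_le (one_le_clock (H.nonneg · ω) n)) _
  have hQN (n : ℕ) : 0 < Q n ω / N n := div_pos (one_pos.trans_le (H.one_le n ω)) (hN n)
  have hbdd : (fun n => (Q n ω / N n) ^ (2 - s)) =O[atTop] fun _ => (1 : ℝ) := by
    have : (fun n => Q n ω / N n) =O[atTop] fun _ => (1 : ℝ) := by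
      have := hQO.mul (Asymptotics.isBigO_refl (fun n => (N n)⁻¹) atTop)
      refine this.congr (fun n => (div_eq_mul_inv _ _).symm) fun n => mul_inv_cancel₀ (hN n).ne'
    simpa only [Real.one_rpow] using this.rpow (sub_nonneg.2 H.exponent_le_two)
      (Eventually.of_forall fun _ => zero_le_one)
  have hsq : (fun n => (|c n ω| / N n) ^ (2 : ℝ)) =O[atTop]
      fun n => h n ω * (Q n ω / N n) ^ 2 := by
    refine (hO.mul (Asymptotics.isBigO_refl (fun n => (N n ^ 2)⁻¹) atTop)).congr
      (fun n => ?_) fun n => ?_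
    · rw [Real.rpow_two, div_pow, sq_abs, div_eq_mul_inv]
    · rw [div_pow, div_eq_mul_inv, mul_assoc]
  refine hsq.trans (((Asymptotics.isBigO_refl
    (fun n => h n ω * (Q n ω / N n) ^ s) atTop).mul hbdd).congr (fun n => ?_) fun n => mul_one _)
  rw [mul_assoc, ← Real.rpow_add (hQN n), add_sub_cancel, Real.rpow_two]

end HasGrowthControl

lemma robbins_siegmund_of_le_add_mul [IsProbabilityMeasure μ] {Y m l r ξ η w : ℕ → Ω → ℝ}
    (hY0m : StronglyMeasurable[F 0] (Y 0)) (hm : ∀ n, StronglyMeasurable[F n] (m n))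
    (hl : ∀ n, StronglyMeasurable[F n] (l n)) (hr : ∀ n, StronglyMeasurable[F n] (r n))
    (hξm : ∀ n, StronglyMeasurable[F (n + 1)] (ξ n)) (hξ : ∀ n, Integrable (ξ n) μ)
    (hξ0 : ∀ n, μ[ξ n | F n] =ᵐ[μ] 0)
    (hηm : ∀ n, StronglyMeasurable[F (n + 1)] (η n)) (hη : ∀ n, Integrable (η n) μ)
    (hY : ∀ n ω, 0 ≤ Y n ω) (hw : ∀ n ω, 0 ≤ w n ω)
    (hrec : ∀ n ω, Y (n + 1) ω ≤ Y n ω + m n ω + l n ω * ξ n ω + r n ω * η n ω)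
    (hD : ∀ᵐ ω ∂μ, ∃ v : ℕ → ℝ, Summable v ∧ (∀ n, 0 ≤ v n) ∧
      ∀ n, m n ω + r n ω * (μ[η n | F n]) ω + w n ω ≤ v n) :
    ∀ᵐ ω ∂μ, BddAbove (Set.range fun n => Y n ω) ∧ Summable fun n => w n ω := by
  have hF (n : ℕ) := F.mono n.le_succ
  have hVD (n : ℕ) : IsLocalCondExp μ (F n) (m n + (l n * ξ n + r n * η n))
      (m n + (l n * 0 + r n * μ[η n | F n])) :=
    (IsLocalCondExp.of_stronglyMeasurable (F.le n) (hm n)).add (F.le n)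
      (((IsLocalCondExp.of_integrable (hξ n) stronglyMeasurable_zero (hξ0 n)).mul_left (F.le n)
        (hl n)).add (F.le n) ((IsLocalCondExp.of_integrable (hη n) stronglyMeasurable_condExp
          EventuallyEq.rfl).mul_left (F.le n) (hr n)))
  refine robbins_siegmund hY0m (fun n => ((hm n).mono (hF n)).add
    ((((hl n).mono (hF n)).mul (hξm n)).add (((hr n).mono (hF n)).mul (hηm n)))) hVD hY hw
    (fun n ω => (hrec n ω).trans_eq ?_) ?_
  · simp only [Pi.add_apply, Pi.mul_apply]; ring
  · simpa only [Pi.add_apply, Pi.mul_apply, Pi.zero_apply, mul_zero, zero_add] using hD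

lemma isLittleO_sum_clock {h q u : ℕ → ℝ} (hh : ∀ n, 0 ≤ h n) (hq : ∀ n, 1 ≤ q n)
    (htop : Tendsto (clock h) atTop atTop)
    (hsum : (fun n => ∑ k ∈ range n, h k * q k) =O[atTop] clock h)
    (hu : u =o[atTop] fun n => h n * q n) :
    (fun n => ∑ k ∈ range n, u k) =o[atTop] clock h := by
  refine (hu.sum_range (fun n => mul_nonneg (hh n) (zero_le_one.trans (hq n))) ?_).trans_isBigO hsum
  have hpartial : Tendsto (fun n => ∑ k ∈ range n, h k) atTop atTop :=
    (tendsto_add_atTop_iff_nat 1).1 (by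
      simpa [clock] using tendsto_atTop_add_const_left atTop (-1) htop)
  exact tendsto_atTop_mono
    (fun n => sum_le_sum fun k _ => le_mul_of_one_le_right (hh k) (hq k)) hpartial

/-- A martingale difference noise with constant conditional variance `σ ^ 2` and bounded conditional
moments of order `a`. Here `e n` is revealed at time `n + 1`. -/
structure IsHomoscedasticNoise (F : Filtration ℕ m0) (μ : Measure Ω) (a σ : ℝ) (e : ℕ → Ω → ℝ) :
    Prop where
  moment : HasBddCondMoment F μ a e
  condExp_eq : ∀ n, μ[e n | F n] =ᵐ[μ] 0
  condExp_sq : ∀ n, μ[fun ω => e n ω ^ 2 | F n] =ᵐ[μ] fun _ => σ ^ 2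

lemma abs_rpow_le_one_add_rpow {r a : ℝ} (hr : 0 ≤ r) (hra : r ≤ a) (x : ℝ) :
    |x| ^ r ≤ 1 + |x| ^ a := by
  rcases le_total |x| 1 with h | h
  · linarith [Real.rpow_le_one (abs_nonneg x) h hr, Real.rpow_nonneg (abs_nonneg x) a]
  · linarith [Real.rpow_le_rpow_of_exponent_le h hra]

lemma one_add_sq_rpow_le {r a : ℝ} (hr : 0 ≤ r) (hra : 2 * r ≤ a) (x : ℝ) :
    (1 + x ^ 2) ^ r ≤ 2 ^ r * (1 + |x| ^ a) := by
  have ha : 0 ≤ |x| ^ a := Real.rpow_nonneg (abs_nonneg x) a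
  rcases le_total |x| 1 with h | h
  · have hx : 1 + x ^ 2 ≤ 2 := by linarith [(sq_le_one_iff_abs_le_one x).2 h]
    calc (1 + x ^ 2) ^ r ≤ 2 ^ r := Real.rpow_le_rpow (by positivity) hx hr
      _ ≤ _ := le_mul_of_one_le_right (by positivity) (by linarith)
  · have hx : 1 + x ^ 2 ≤ 2 * |x| ^ 2 := by nlinarith [sq_abs x]
    calc (1 + x ^ 2) ^ r ≤ (2 * |x| ^ 2) ^ r := Real.rpow_le_rpow (by positivity) hx hr
      _ = 2 ^ r * |x| ^ (2 * r) := by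
        rw [Real.mul_rpow zero_le_two (by positivity), ← Real.rpow_natCast_mul (abs_nonneg x)]
        norm_num
      _ ≤ 2 ^ r * (1 + |x| ^ a) := by
        gcongr
        exact (Real.rpow_le_rpow_of_exponent_le h hra).trans (le_add_of_nonneg_left zero_le_one)

namespace IsHomoscedasticNoise

variable [IsProbabilityMeasure μ] {a σ s r : ℝ} {e : ℕ → Ω → ℝ}

lemma hasBddCondMoment (he : IsHomoscedasticNoise F μ a σ e) (hs : 0 ≤ s) (hsa : s ≤ a) :
    HasBddCondMoment F μ s e :=
  he.moment.of_abs_rpow_le he.moment.adapted hs zero_le_one fun _ _ =>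
    (abs_rpow_le_one_add_rpow hs hsa _).trans (one_mul _).ge

lemma hasBddCondMoment_one_add_sq_rpow (he : IsHomoscedasticNoise F μ a σ e) (hs : 0 ≤ s)
    (hr : 0 ≤ r) (hrs : 2 * (r * s) ≤ a) :
    HasBddCondMoment F μ s fun n ω => (1 + e n ω ^ 2) ^ r := by
  have hcont : Continuous fun x : ℝ => (1 + x ^ 2) ^ r := by
    refine Continuous.rpow_const (by fun_prop) fun _ => Or.inr hr
  refine he.moment.of_abs_rpow_le
    (fun n => hcont.comp_stronglyMeasurable (he.moment.adapted n)) hs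
    (by positivity : (0 : ℝ) ≤ 2 ^ (r * s)) fun n ω => ?_
  rw [abs_of_nonneg (by positivity), ← Real.rpow_mul (by positivity)]
  exact one_add_sq_rpow_le (by positivity) hrs _

lemma hasBddCondMoment_sq (he : IsHomoscedasticNoise F μ a σ e) (hs : 0 ≤ s) (hsa : 2 * s ≤ a) :
    HasBddCondMoment F μ s fun n ω => e n ω ^ 2 := by
  refine he.moment.of_abs_rpow_le
    (fun n => (he.moment.adapted n).pow 2) hs zero_le_one fun n ω => ?_
  rw [abs_of_nonneg (by positivity), ← sq_abs, ← Real.rpow_natCast_mul (abs_nonneg _), one_mul]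
  exact abs_rpow_le_one_add_rpow (by positivity) (by exact_mod_cast hsa) _

end IsHomoscedasticNoise

/-- The recursion `U (n + 1) = x n + 2 G n e n + h n (e n) ^ 2` satisfied by a quadratic form
evaluated at the current estimation error: `x n` is the value just before the noise `e n` enters. -/
structure IsQuadraticRecursion (F : Filtration ℕ m0) (b : ℝ) (e U x G h : ℕ → Ω → ℝ) :
    Prop where
  stronglyMeasurable : ∀ n, StronglyMeasurable[F n] (U n)
  stronglyMeasurable_predicted : ∀ n, StronglyMeasurable[F n] (x n)
  stronglyMeasurable_slope : ∀ n, StronglyMeasurable[F n] (G n)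
  stronglyMeasurable_step : ∀ n, StronglyMeasurable[F n] (h n)
  step_nonneg : ∀ n ω, 0 ≤ h n ω
  step_le : ∀ n ω, h n ω ≤ b
  predicted_nonneg : ∀ n ω, 0 ≤ x n ω
  predicted_le : ∀ n ω, x n ω ≤ U n ω
  slope_sq_le : ∀ n ω, G n ω ^ 2 ≤ h n ω * x n ω
  succ : ∀ n ω, U (n + 1) ω = x n ω + 2 * G n ω * e n ω + h n ω * e n ω ^ 2

namespace IsQuadraticRecursion

variable {b c q : ℝ} {e U x G h : ℕ → Ω → ℝ}

lemma nonneg (R : IsQuadraticRecursion F b e U x G h) (n : ℕ) (ω : Ω) : 0 ≤ U n ω :=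
  (R.predicted_nonneg n ω).trans (R.predicted_le n ω)

lemma exists_one_add_rpow_le (R : IsQuadraticRecursion F b e U x G h)
    (hcontr : ∀ n ω, x n ω ≤ (1 - c * h n ω) * U n ω) (hq : 1 ≤ q) :
    ∃ C : ℝ, 0 ≤ C ∧ ∀ n ω, (1 + U (n + 1) ω) ^ q ≤ (1 + U n ω) ^ q -
      c * (h n ω * (1 + U n ω) ^ q) + 2 * q * ((1 + x n ω) ^ (q - 1) * G n ω) * e n ω +
      h n ω * (1 + U n ω) ^ (q - 1) * (c + C * (1 + e n ω ^ 2) ^ q) := by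
  obtain ⟨C, hC, hexp⟩ := exists_add_two_mul_add_rpow_le hq
  refine ⟨C * (1 + |b|) ^ (q - 1), by positivity, fun n ω => ?_⟩
  have hx := R.predicted_nonneg n ω
  have hh := R.step_nonneg n ω
  have hU := R.nonneg n ω
  have hZ : 0 < 1 + U n ω := by linarith
  have hstep := hexp (1 + x n ω) (G n ω * e n ω) (h n ω * e n ω ^ 2) (by linarith) (by positivity)
    (by nlinarith [mul_le_mul_of_nonneg_right (R.slope_sq_le n ω) (sq_nonneg (e n ω)),
      mul_nonneg hh (sq_nonneg (e n ω))])
  have hpow {y : ℝ} (hy : 0 < y) : y ^ q = y ^ (q - 1) * y := by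
    rw [← Real.rpow_add_one hy.ne', sub_add_cancel]
  have hpred : (1 + x n ω) ^ q ≤
      (1 + U n ω) ^ (q - 1) * ((1 + U n ω) - c * h n ω * (1 + U n ω) + c * h n ω) := by
    rw [hpow (by positivity)]
    exact mul_le_mul (Real.rpow_le_rpow (by positivity) (by linarith [R.predicted_le n ω])
      (by linarith)) (by linarith [hcontr n ω]) (by positivity) (by positivity)
  have hbase : 1 + x n ω + h n ω * e n ω ^ 2 ≤ (1 + |b|) * (1 + U n ω) * (1 + e n ω ^ 2) := by
    have hhb : h n ω ≤ |b| := (R.step_le n ω).trans (le_abs_self b)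
    nlinarith [R.predicted_le n ω, mul_le_mul_of_nonneg_right hhb (sq_nonneg (e n ω)),
      mul_nonneg (abs_nonneg b) hU, mul_nonneg hZ.le (sq_nonneg (e n ω)), abs_nonneg b,
      mul_nonneg (mul_nonneg (abs_nonneg b) hU) (sq_nonneg (e n ω))]
  have hrem : C * (h n ω * e n ω ^ 2) * (1 + x n ω + h n ω * e n ω ^ 2) ^ (q - 1) ≤
      h n ω * (1 + U n ω) ^ (q - 1) * (C * (1 + |b|) ^ (q - 1) * (1 + e n ω ^ 2) ^ q) := by
    calc _ ≤ C * (h n ω * (1 + e n ω ^ 2)) *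
          ((1 + |b|) * (1 + U n ω) * (1 + e n ω ^ 2)) ^ (q - 1) := by
            gcongr
            linarith
      _ = _ := by
        rw [Real.mul_rpow (by positivity) (by positivity), Real.mul_rpow (by positivity) hZ.le,
          hpow (by positivity : 0 < 1 + e n ω ^ 2)]
        ring
  rw [R.succ, hpow hZ, show 1 + (x n ω + 2 * G n ω * e n ω + h n ω * e n ω ^ 2) =
    1 + x n ω + 2 * (G n ω * e n ω) + h n ω * e n ω ^ 2 by ring]
  linarith

variable [IsProbabilityMeasure μ] {a σ : ℝ}

theorem ae_bddAbove_and_summable (R : IsQuadraticRecursion F b e U x G h)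
    (he : IsHomoscedasticNoise F μ a σ e) (hc : 0 < c)
    (hcontr : ∀ n ω, x n ω ≤ (1 - c * h n ω) * U n ω) (hq : 1 ≤ q) (hqa : 2 * q ≤ a) {r : ℝ}
    (hr : 1 < r) :
    ∀ᵐ ω ∂μ, BddAbove (Set.range fun n => (1 + U n ω) ^ q / (1 + ∑ k ∈ range n, h k ω) ^ r) ∧
      Summable fun n => h n ω / clock (h · ω) n ^ r * (1 + U n ω) ^ q := by
  obtain ⟨C, hC, hstep⟩ := R.exists_one_add_rpow_le hcontr hq
  have he1 := he.hasBddCondMoment (s := 1) zero_le_one (by linarith)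
  have hρ := he.hasBddCondMoment_one_add_sq_rpow (s := 1) (r := q) zero_le_one (by linarith)
    (by linarith)
  have hU (n : ℕ) := (R.stronglyMeasurable n).measurable
  have hx (n : ℕ) := (R.stronglyMeasurable_predicted n).measurable
  have hG (n : ℕ) := (R.stronglyMeasurable_slope n).measurable
  have hh (n : ℕ) := (R.stronglyMeasurable_step n).measurable
  have hN (n : ℕ) := (stronglyMeasurable_clock R.stronglyMeasurable_step n).measurable
  have hpos (n : ℕ) (ω : Ω) : 0 < clock (h · ω) n ^ r :=
    Real.rpow_pos_of_pos (one_pos.trans_le (one_le_clock (R.step_nonneg · ω) n)) r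
  have hZ (n : ℕ) (ω : Ω) : 1 ≤ 1 + U n ω := le_add_of_nonneg_right (R.nonneg n ω)
  have hu (n : ℕ) (ω : Ω) : 0 ≤ h n ω / clock (h · ω) n ^ r :=
    div_nonneg (R.step_nonneg n ω) (hpos n ω).le
  have key := robbins_siegmund_of_le_add_mul
    (Y := fun n ω => (1 + U n ω) ^ q / (1 + ∑ k ∈ range n, h k ω) ^ r)
    (m := fun n ω => c * (h n ω / clock (h · ω) n ^ r * ((1 + U n ω) ^ (q - 1) - (1 + U n ω) ^ q)))
    (l := fun n ω => 2 * q * ((1 + x n ω) ^ (q - 1) * G n ω) / clock (h · ω) n ^ r)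
    (r := fun n ω => C * (h n ω / clock (h · ω) n ^ r * (1 + U n ω) ^ (q - 1)))
    (w := fun n ω => c / 2 * (h n ω / clock (h · ω) n ^ r * (1 + U n ω) ^ q))
    (by simpa using (((hU 0).const_add 1).pow_const q).stronglyMeasurable)
    (fun n => Measurable.stronglyMeasurable (by fun_prop))
    (fun n => Measurable.stronglyMeasurable (by fun_prop))
    (fun n => Measurable.stronglyMeasurable (by fun_prop))
    he1.adapted (he1.integrable le_rfl) he.condExp_eq hρ.adapted (hρ.integrable le_rfl)
    (fun n ω => ?_) (fun n ω => ?_) (fun n ω => ?_) ?_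
  · exact key.mono fun ω hω => ⟨hω.1, (summable_mul_left_iff (half_pos hc).ne').1 hω.2⟩
  · have := sum_nonneg fun k (_ : k ∈ range n) => R.step_nonneg k ω
    have := hZ n ω
    positivity
  · have := hu n ω
    have := hZ n ω
    positivity
  · refine (div_le_div_of_nonneg_right (hstep n ω) (hpos n ω).le).trans ?_
    linear_combination div_clock_rpow_le (R.step_nonneg · ω) (zero_le_one.trans hr.le)
      (Real.rpow_nonneg (zero_le_one.trans (hZ n ω)) q) n
  · filter_upwards [hρ.ae_bdd_condExp le_rfl] with ω ⟨K, hK⟩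
    obtain ⟨B, hB, hdrift⟩ := exists_drift_le hc hq hC ((abs_nonneg _).trans (hK 0))
    exact ⟨_, (summable_div_clock_rpow (R.step_nonneg · ω) hr).mul_left B,
      fun n => mul_nonneg hB (hu n ω),
      fun n => hdrift _ _ _ (hu n ω) (hZ n ω) ((le_abs_self _).trans (hK n))⟩

lemma exists_growth_exponents {p a : ℝ} (hp : 1 ≤ p) (ha : 2 * p < a) :
    ∃ s γ : ℝ, 1 ≤ s ∧ s ≤ 2 ∧ 0 ≤ γ ∧ γ < 1 ∧ 1 < s * γ ∧ 2 * (p * s) ≤ a := by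
  have : 0 < p := by linarith
  have hs : 1 < min 2 (a / (2 * p)) := lt_min one_lt_two ((one_lt_div (by positivity)).2 ha)
  set s := min 2 (a / (2 * p))
  have : 0 < s := by linarith
  have hsγ : s * ((1 + s⁻¹) / 2) = (s + 1) / 2 := by field_simp
  refine ⟨s, (1 + s⁻¹) / 2, hs.le, min_le_left _ _, by positivity, ?_, by linarith, ?_⟩
  · linarith [inv_lt_one_of_one_lt₀ hs]
  · have := (le_div_iff₀ (by positivity)).1 (min_le_right 2 (a / (2 * p)))
    linarith

theorem exists_hasGrowthControl (R : IsQuadraticRecursion F b e U x G h)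
    (he : IsHomoscedasticNoise F μ a σ e) (hc : 0 < c)
    (hcontr : ∀ n ω, x n ω ≤ (1 - c * h n ω) * U n ω)
    (htop : ∀ᵐ ω ∂μ, Tendsto (clock fun n => h n ω) atTop atTop) {p : ℝ} (hp : 1 ≤ p)
    (ha : 2 * p < a) :
    ∃ s γ : ℝ, HasGrowthControl F μ s γ b h (fun n ω => (1 + U n ω) ^ p) ∧ 2 * (p * s) ≤ a := by
  obtain ⟨s, γ, hs1, hs2, hγ0, hγ1, hsγ, hsa⟩ := exists_growth_exponents hp ha
  have hs0 : 0 < s := by linarith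
  have hclock (n : ℕ) (ω : Ω) : 0 < clock (fun n => h n ω) n :=
    one_pos.trans_le (one_le_clock (R.step_nonneg · ω) n)
  have hZ (n : ℕ) (ω : Ω) : 0 ≤ 1 + U n ω := by linarith [R.nonneg n ω]
  have hbdd := R.ae_bddAbove_and_summable he hc hcontr (by nlinarith : 1 ≤ p * s) hsa hsγ
  refine ⟨s, γ, ⟨hs1, hs2, hγ0, hγ1, R.stronglyMeasurable_step, R.step_nonneg, R.step_le,
    fun n ω => Real.one_le_rpow (by linarith [R.nonneg n ω]) (by linarith), htop, ?_, ?_⟩, hsa⟩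
  · filter_upwards [hbdd] with ω ⟨_, hsum⟩
    refine hsum.congr fun n => ?_
    rw [Real.div_rpow (Real.rpow_nonneg (hZ n ω) p) (Real.rpow_nonneg (hclock n ω).le γ),
      ← Real.rpow_mul (hZ n ω), ← Real.rpow_mul (hclock n ω).le, mul_comm γ s, div_mul_eq_mul_div,
      mul_div_assoc]
  · filter_upwards [hbdd] with ω ⟨⟨B, hB⟩, _⟩
    have hpow : (fun n => (1 + U n ω) ^ (p * s)) =O[atTop]
        fun n => clock (fun n => h n ω) n ^ (s * γ) := by
      refine .of_bound B (Eventually.of_forall fun n => ?_)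
      have hpos := Real.rpow_pos_of_pos (hclock n ω) (s * γ)
      rw [Real.norm_of_nonneg (Real.rpow_nonneg (hZ n ω) _), Real.norm_of_nonneg hpos.le,
        ← div_le_iff₀ hpos]
      exact (div_clock_rpow_le (R.step_nonneg · ω) (by positivity)
        (Real.rpow_nonneg (hZ n ω) _) n).trans (hB ⟨n, rfl⟩)
    refine (hpow.rpow (inv_nonneg.2 hs0.le) (Eventually.of_forall fun n =>
      Real.rpow_nonneg (hclock n ω).le _)).congr (fun n => ?_) fun n => ?_
    · rw [← Real.rpow_mul (hZ n ω), mul_inv_cancel_right₀ hs0.ne']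
    · rw [← Real.rpow_mul (hclock n ω).le, mul_comm s, mul_inv_cancel_right₀ hs0.ne']

lemma sum_mul_rpow_isBigO_clock {h Z l : ℕ → ℝ} {K p : ℝ} (hh : ∀ n, 0 ≤ h n) (hZ : ∀ n, 1 ≤ Z n)
    (hc : 0 < c) (hp : 1 ≤ p) (hK : 0 ≤ K)
    (hstep : ∀ n, Z (n + 1) ^ p ≤ Z n ^ p - c * (h n * Z n ^ p) + l n + K * (h n * Z n ^ (p - 1)))
    (hl : (fun n => ∑ k ∈ range n, l k) =o[atTop] clock h) :
    (fun n => ∑ k ∈ range n, h k * Z k ^ p) =O[atTop] clock h := by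
  obtain ⟨B, hB, habs⟩ := exists_mul_rpow_sub_one_le (half_pos hc) hp hK
  have hpow (n : ℕ) : 0 ≤ Z n ^ p := Real.rpow_nonneg (zero_le_one.trans (hZ n)) p
  have hsum (n : ℕ) : Z n ^ p + c / 2 * ∑ k ∈ range n, h k * Z k ^ p ≤
      Z 0 ^ p + ∑ k ∈ range n, l k + B * ∑ k ∈ range n, h k := by
    induction n with
    | zero => simp
    | succ n ih =>
      simp only [sum_range_succ]
      linarith [hstep n, mul_le_mul_of_nonneg_left (habs (Z n) (hZ n)) (hh n)]
  have hO : (fun n => 2 / c * ((Z 0 ^ p + B) * clock h n + ∑ k ∈ range n, l k)) =O[atTop]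
      clock h :=
    (((Asymptotics.isBigO_refl _ _).const_mul_left _).add hl.isBigO).const_mul_left _
  refine (Asymptotics.IsBigO.of_bound' (Eventually.of_forall fun n => ?_)).trans hO
  have hclock : ∑ k ∈ range n, h k ≤ clock h n := by
    rw [clock, sum_range_succ]; linarith [hh n]
  rw [Real.norm_of_nonneg (sum_nonneg fun k _ => mul_nonneg (hh k) (hpow k))]
  refine le_trans ?_ (le_abs_self _)
  rw [div_mul_eq_mul_div, le_div_iff₀ hc]
  nlinarith [hsum n, hpow n, hpow 0, mul_le_mul_of_nonneg_left (one_le_clock hh n) (hpow 0),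
    mul_le_mul_of_nonneg_left hclock hB]

lemma sq_rpow_mul_slope_le (R : IsQuadraticRecursion F b e U x G h) {p : ℝ} (hp : 1 ≤ p)
    (n : ℕ) (ω : Ω) :
    ((1 + x n ω) ^ (p - 1) * G n ω) ^ 2 ≤ h n ω * ((1 + U n ω) ^ p) ^ 2 := by
  have hx := R.predicted_nonneg n ω
  have hU := R.nonneg n ω
  have hh := R.step_nonneg n ω
  calc _ = ((1 + x n ω) ^ (p - 1)) ^ 2 * G n ω ^ 2 := mul_pow ..
    _ ≤ ((1 + U n ω) ^ (p - 1)) ^ 2 * (h n ω * (1 + U n ω) ^ 2) := by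
      gcongr
      · exact R.predicted_le n ω
      · nlinarith [R.slope_sq_le n ω, mul_le_mul_of_nonneg_left (R.predicted_le n ω) hh,
          mul_nonneg hh hU]
    _ = _ := by
      rw [← sub_add_cancel p 1, Real.rpow_add_one (by positivity), add_sub_cancel_right]
      ring

theorem sum_isBigO_clock (R : IsQuadraticRecursion F b e U x G h)
    (he : IsHomoscedasticNoise F μ a σ e) (hc : 0 < c)
    (hcontr : ∀ n ω, x n ω ≤ (1 - c * h n ω) * U n ω) {p s γ : ℝ} (hp : 1 ≤ p) (ha : 2 ≤ a)
    (hpa : 2 * (p * s) ≤ a)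
    (H : HasGrowthControl F μ s γ b h fun n ω => (1 + U n ω) ^ p) :
    ∀ᵐ ω ∂μ, (fun n => ∑ k ∈ range n, h k ω * (1 + U k ω) ^ p) =O[atTop]
      clock fun n => h n ω := by
  obtain ⟨C, hC, hstep⟩ := R.exists_one_add_rpow_le hcontr hp
  have hs1 := H.one_le_exponent
  have he2 := he.hasBddCondMoment zero_le_two ha
  have hρ := he.hasBddCondMoment_one_add_sq_rpow (r := p) (zero_le_one.trans hs1) (by linarith) hpa
  have hZ (n : ℕ) (ω : Ω) : 1 ≤ 1 + U n ω := le_add_of_nonneg_right (R.nonneg n ω)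
  have hU (n : ℕ) := (R.stronglyMeasurable n).measurable
  have hx (n : ℕ) := (R.stronglyMeasurable_predicted n).measurable
  have hG (n : ℕ) := (R.stronglyMeasurable_slope n).measurable
  have hh (n : ℕ) := (R.stronglyMeasurable_step n).measurable
  have hlin := H.ae_isLittleO_sum_of_sq_isBigO he2
    (c := fun n ω => 2 * p * ((1 + x n ω) ^ (p - 1) * G n ω))
    (fun n => Measurable.stronglyMeasurable (by fun_prop))
    (ae_of_all _ fun ω => ?_)
  · have hrem := H.ae_isLittleO_sum_of_isBigO hρ
      (c := fun n ω => C * (h n ω * (1 + U n ω) ^ (p - 1)))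
      (fun n => Measurable.stronglyMeasurable (by fun_prop))
      (ae_of_all _ fun ω => ?_)
    · filter_upwards [hlin, hrem, hρ.ae_bdd_condExp hs1, ae_all_iff.2 he.condExp_eq]
        with ω hlin hrem ⟨K, hK⟩ he0
      have hK0 : 0 ≤ K := (abs_nonneg _).trans (hK 0)
      refine sum_mul_rpow_isBigO_clock (R.step_nonneg · ω) (hZ · ω) hc hp
        (by positivity : 0 ≤ c + C * K) (fun n => ?_)
        ((hlin.add hrem).congr_left fun n => sum_add_distrib.symm)
      have hw : 0 ≤ h n ω * (1 + U n ω) ^ (p - 1) := mul_nonneg (R.step_nonneg n ω)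
        (Real.rpow_nonneg (zero_le_one.trans (hZ n ω)) _)
      rw [he0 n, Pi.zero_apply]
      nlinarith [hstep n ω,
        mul_le_mul_of_nonneg_left ((le_abs_self _).trans (hK n)) (mul_nonneg hC hw)]
    · refine ((Asymptotics.isBigO_refl _ _).mul (.of_bound' (Eventually.of_forall fun n => ?_))
        ).const_mul_left C
      have := hZ n ω
      rw [Real.norm_of_nonneg (by positivity), Real.norm_of_nonneg (by positivity)]
      exact Real.rpow_le_rpow_of_exponent_le this (sub_le_self p zero_le_one)
  · refine .of_bound ((2 * p) ^ 2) (Eventually.of_forall fun n => ?_)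
    rw [Real.norm_of_nonneg (sq_nonneg _), Real.norm_of_nonneg
      (mul_nonneg (R.step_nonneg n ω) (sq_nonneg _)), mul_pow (2 * p)]
    exact mul_le_mul_of_nonneg_left (R.sq_rpow_mul_slope_le hp n ω) (sq_nonneg _)

end IsQuadraticRecursion

lemma HasGrowthControl.ae_isLittleO_sum_mul [IsProbabilityMeasure μ] {s γ b : ℝ}
    {h Q c η : ℕ → Ω → ℝ} (H : HasGrowthControl F μ s γ b h Q) (hη : HasBddCondMoment F μ s η)
    (hsum : ∀ᵐ ω ∂μ, (fun n => ∑ k ∈ range n, h k ω * Q k ω) =O[atTop] clock fun n => h n ω)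
    (hc : ∀ n, StronglyMeasurable[F n] (c n))
    (hco : ∀ᵐ ω ∂μ, (fun n => c n ω) =o[atTop] fun n => h n ω * Q n ω) :
    ∀ᵐ ω ∂μ, (fun n => ∑ k ∈ range n, c k ω * η k ω) =o[atTop] clock fun n => h n ω := by
  filter_upwards [H.ae_isLittleO_sum_of_isBigO hη hc (hco.mono fun ω hω => hω.isBigO),
    hη.ae_bdd_condExp H.one_le_exponent, H.tendsto_clock, hsum, hco]
    with ω hmart ⟨K, hK⟩ htop hsum hco
  have hmean : (fun n => c n ω * (μ[η n | F n]) ω) =o[atTop] fun n => h n ω * Q n ω := by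
    have hbdd : (fun n => (μ[η n | F n]) ω) =O[atTop] fun _ => (1 : ℝ) :=
      .of_bound K (Eventually.of_forall fun n => by simpa using hK n)
    simpa only [mul_one] using hco.mul_isBigO hbdd
  refine (hmart.add (isLittleO_sum_clock (H.nonneg · ω) (H.one_le · ω) htop hsum
    hmean)).congr_left fun n => ?_
  rw [← sum_add_distrib]
  exact sum_congr rfl fun k _ => by ring

lemma sqCoeff_nonneg {j : ℕ} {x k Γ : ℝ} (hx : 0 ≤ x) (hk : 0 ≤ k) (hΓ : 0 ≤ Γ) :
    0 ≤ sqCoeff j x k Γ := by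
  rw [sqCoeff]; positivity

lemma sqCoeff_le {j : ℕ} {x k Γ : ℝ} (hx : 0 ≤ x) (hk : 0 ≤ k) (hΓ : Γ ≤ k * x) :
    sqCoeff j x k Γ ≤ (j + 1) * (1 + 2 * j) * (k * (1 + x) ^ (j + 1)) := by
  have hpow : x ^ j ≤ (1 + x) ^ (j + 1) :=
    (pow_le_pow_left₀ hx (by linarith) j).trans (pow_le_pow_right₀ (by linarith) j.le_succ)
  calc sqCoeff j x k Γ ≤ (j + 1) * (1 + 2 * j) * (k * x ^ j) := by
        rw [sqCoeff]
        rcases j with _ | i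
        · simp
        · rw [Nat.add_sub_cancel, pow_succ]
          have := mul_le_mul_of_nonneg_left hΓ
            (by positivity : 0 ≤ 2 * ((↑(i + 1) : ℝ) + 1) * ↑(i + 1) * x ^ i)
          linarith
    _ ≤ _ := by gcongr

namespace IsQuadraticRecursion

variable {b : ℝ} {e U x G h : ℕ → Ω → ℝ}

lemma exists_abs_pow_succ_sub_le (R : IsQuadraticRecursion F b e U x G h) (j : ℕ) :
    ∃ C : ℝ, ∀ n ω, |U (n + 1) ω ^ (j + 1) - x n ω ^ (j + 1) -
      2 * (j + 1) * x n ω ^ j * G n ω * e n ω -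
      sqCoeff j (x n ω) (h n ω) (G n ω ^ 2) * e n ω ^ 2| ≤
      √(h n ω) * (C * (h n ω * (1 + x n ω) ^ (j + 1))) * (1 + e n ω ^ 2) ^ (j + 1) := by
  obtain ⟨C, -, hexp⟩ := exists_abs_add_two_mul_add_pow_sub_le (√b) (Real.sqrt_nonneg b) j
  refine ⟨C, fun n ω => ?_⟩
  have hh := R.step_nonneg n ω
  have hx := R.predicted_nonneg n ω
  have he := sq_nonneg (e n ω)
  have hxX : x n ω ≤ (1 + x n ω) * (1 + e n ω ^ 2) := by nlinarith [mul_nonneg hx he]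
  have heX : e n ω ^ 2 ≤ (1 + x n ω) * (1 + e n ω ^ 2) := by nlinarith [mul_nonneg hx he]
  have hslope : (G n ω * e n ω) ^ 2 ≤ h n ω * e n ω ^ 2 * x n ω := by
    rw [mul_pow]
    linarith [mul_le_mul_of_nonneg_right (R.slope_sq_le n ω) he]
  refine le_trans (le_of_eq ?_) ((hexp (x n ω) (G n ω * e n ω) (h n ω * e n ω ^ 2) (√(h n ω)) _ hx
    hxX (mul_nonneg hh he) (by rw [Real.sq_sqrt hh]; gcongr) hslope (Real.sqrt_nonneg _)
    (Real.sqrt_le_sqrt (R.step_le n ω))).trans_eq ?_)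
  · rw [R.succ, sqCoeff, sqCoeff]
    ring_nf
  · rw [pow_succ _ 2, Real.sq_sqrt hh, mul_pow]
    ring

lemma step_mul_one_add_pow_isBigO (R : IsQuadraticRecursion F b e U x G h) (j : ℕ) (ω : Ω) :
    (fun n => h n ω * (1 + x n ω) ^ (j + 1)) =O[atTop] fun n => h n ω * (1 + U n ω) ^ (j + 1) := by
  refine .of_bound' (Eventually.of_forall fun n => ?_)
  have hh := R.step_nonneg n ω
  have hx := R.predicted_nonneg n ω
  have hxU := R.predicted_le n ω
  rw [Real.norm_of_nonneg (by positivity), Real.norm_of_nonneg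
    (mul_nonneg hh (pow_nonneg (by linarith) _))]
  gcongr

lemma pow_sub_pow_zero_isLittleO_clock {h' Q : ℕ → Ω → ℝ} {s γ b' : ℝ} {j : ℕ}
    (R : IsQuadraticRecursion F b e U x G h) (H : HasGrowthControl F μ s γ b' h' Q)
    (hUQ : ∀ᵐ ω ∂μ, (fun n => (1 + U n ω) ^ (j + 1)) =O[atTop] fun n => Q n ω) :
    ∀ᵐ ω ∂μ, (fun n => U n ω ^ (j + 1) - U 0 ω ^ (j + 1)) =o[atTop] clock fun n => h' n ω := by
  filter_upwards [hUQ, H.isBigO, H.tendsto_clock] with ω hUQ hQ htop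
  have hpow : (fun n => U n ω ^ (j + 1)) =O[atTop] fun n => (1 + U n ω) ^ (j + 1) := by
    refine .of_bound' (Eventually.of_forall fun n => ?_)
    have hU := R.nonneg n ω
    rw [Real.norm_of_nonneg (by positivity), Real.norm_of_nonneg (by positivity)]
    gcongr
    linarith
  exact ((hpow.trans (hUQ.trans hQ)).trans_isLittleO
    ((isLittleO_rpow_self H.rate_lt_one).comp_tendsto htop)).sub
    (Asymptotics.isLittleO_const_left.2 (.inr (tendsto_norm_atTop_atTop.comp htop)))

section Drift

variable [IsProbabilityMeasure μ] {h' Q : ℕ → Ω → ℝ} {a σ s γ b' : ℝ} {j : ℕ}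

lemma sum_slope_mul_isLittleO (R : IsQuadraticRecursion F b e U x G h)
    (he : IsHomoscedasticNoise F μ a σ e) (ha : 2 ≤ a) (H : HasGrowthControl F μ s γ b' h' Q)
    (hstep : ∀ᵐ ω ∂μ, (fun n => h n ω) =O[atTop] fun n => h' n ω)
    (hUQ : ∀ᵐ ω ∂μ, (fun n => (1 + U n ω) ^ (j + 1)) =O[atTop] fun n => Q n ω) :
    ∀ᵐ ω ∂μ, (fun n => ∑ k ∈ range n, 2 * (j + 1) * x k ω ^ j * G k ω * e k ω) =o[atTop]
      clock fun n => h' n ω := by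
  have hx (n : ℕ) := (R.stronglyMeasurable_predicted n).measurable
  have hG (n : ℕ) := (R.stronglyMeasurable_slope n).measurable
  have hO : ∀ᵐ ω ∂μ, (fun n => (2 * (j + 1) * x n ω ^ j * G n ω) ^ 2) =O[atTop]
      fun n => h' n ω * Q n ω ^ 2 := by
    filter_upwards [hstep, hUQ] with ω hstep hUQ
    refine .trans (.of_bound ((2 * (j + 1)) ^ 2) (Eventually.of_forall fun n => ?_))
      (hstep.mul (hUQ.pow 2))
    rw [Real.norm_of_nonneg (sq_nonneg _), Real.norm_of_nonneg
      (mul_nonneg (R.step_nonneg n ω) (sq_nonneg _)), mul_assoc _ (x n ω ^ j), mul_pow (2 * _)]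
    have hslope := R.sq_rpow_mul_slope_le (p := ↑(j + 1)) (by simp) n ω
    rw [Nat.cast_succ, add_sub_cancel_right, ← Nat.cast_succ, Real.rpow_natCast,
      Real.rpow_natCast] at hslope
    gcongr
    refine le_trans ?_ hslope
    have := R.predicted_nonneg n ω
    rw [mul_pow, mul_pow]
    gcongr
    linarith
  filter_upwards [H.ae_isLittleO_sum_of_sq_isBigO (he.hasBddCondMoment zero_le_two ha)
    (fun n => Measurable.stronglyMeasurable (by fun_prop)) hO, ae_all_iff.2 he.condExp_eq]
    with ω hω he0
  simpa only [he0, Pi.zero_apply, sub_zero] using hω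

lemma sum_sqCoeff_mul_isLittleO (R : IsQuadraticRecursion F b e U x G h)
    (he : IsHomoscedasticNoise F μ a σ e) (H : HasGrowthControl F μ s γ b' h' Q) (ha : 2 * s ≤ a)
    (hstep : ∀ᵐ ω ∂μ, (fun n => h n ω) =O[atTop] fun n => h' n ω)
    (hUQ : ∀ᵐ ω ∂μ, (fun n => (1 + U n ω) ^ (j + 1)) =O[atTop] fun n => Q n ω) :
    ∀ᵐ ω ∂μ, (fun n => ∑ k ∈ range n, sqCoeff j (x k ω) (h k ω) (G k ω ^ 2) *
      (e k ω ^ 2 - σ ^ 2)) =o[atTop] clock fun n => h' n ω := by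
  have hx (n : ℕ) := (R.stronglyMeasurable_predicted n).measurable
  have hG (n : ℕ) := (R.stronglyMeasurable_slope n).measurable
  have hh (n : ℕ) := (R.stronglyMeasurable_step n).measurable
  have hmeas (n : ℕ) : StronglyMeasurable[F n]
      fun ω => sqCoeff j (x n ω) (h n ω) (G n ω ^ 2) :=
    Measurable.stronglyMeasurable (by simp only [sqCoeff]; fun_prop)
  have hO : ∀ᵐ ω ∂μ, (fun n => sqCoeff j (x n ω) (h n ω) (G n ω ^ 2)) =O[atTop]
      fun n => h' n ω * Q n ω := by
    filter_upwards [hstep, hUQ] with ω hstep hUQ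
    refine .trans (.of_bound ((j + 1) * (1 + 2 * j)) (Eventually.of_forall fun n => ?_))
      ((R.step_mul_one_add_pow_isBigO j ω).trans (hstep.mul hUQ))
    have hx := R.predicted_nonneg n ω
    have hh := R.step_nonneg n ω
    rw [Real.norm_of_nonneg (sqCoeff_nonneg hx hh (sq_nonneg _)),
      Real.norm_of_nonneg (by positivity)]
    exact sqCoeff_le hx hh (R.slope_sq_le n ω)
  filter_upwards [H.ae_isLittleO_sum_of_isBigO
    (he.hasBddCondMoment_sq (zero_le_one.trans H.one_le_exponent) ha) hmeas hO,
    ae_all_iff.2 he.condExp_sq] with ω hω he2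
  simpa only [he2] using hω

lemma sum_expansion_remainder_isLittleO (R : IsQuadraticRecursion F b e U x G h)
    (he : IsHomoscedasticNoise F μ a σ e) (H : HasGrowthControl F μ s γ b' h' Q)
    (ha : 2 * ((j + 1) * s) ≤ a)
    (hsum : ∀ᵐ ω ∂μ, (fun n => ∑ k ∈ range n, h' k ω * Q k ω) =O[atTop] clock fun n => h' n ω)
    (hstep : ∀ᵐ ω ∂μ, (fun n => h n ω) =O[atTop] fun n => h' n ω)
    (hstep0 : ∀ᵐ ω ∂μ, Tendsto (fun n => h n ω) atTop (𝓝 0))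
    (hUQ : ∀ᵐ ω ∂μ, (fun n => (1 + U n ω) ^ (j + 1)) =O[atTop] fun n => Q n ω) :
    ∀ᵐ ω ∂μ, (fun n => ∑ k ∈ range n, (U (k + 1) ω ^ (j + 1) - x k ω ^ (j + 1) -
      2 * (j + 1) * x k ω ^ j * G k ω * e k ω -
      sqCoeff j (x k ω) (h k ω) (G k ω ^ 2) * e k ω ^ 2)) =o[atTop] clock fun n => h' n ω := by
  have hx (n : ℕ) := (R.stronglyMeasurable_predicted n).measurable
  have hh (n : ℕ) := (R.stronglyMeasurable_step n).measurable
  obtain ⟨C, hexp⟩ := R.exists_abs_pow_succ_sub_le j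
  have hco : ∀ᵐ ω ∂μ, (fun n => √(h n ω) * (C * (h n ω * (1 + x n ω) ^ (j + 1)))) =o[atTop]
      fun n => h' n ω * Q n ω := by
    filter_upwards [hstep, hstep0, hUQ] with ω hstep hstep0 hUQ
    have hsqrt : (fun n => √(h n ω)) =o[atTop] fun _ => (1 : ℝ) :=
      (Asymptotics.isLittleO_one_iff ℝ).2 (by simpa using hstep0.sqrt)
    simpa only [one_mul] using hsqrt.mul_isBigO
      (((R.step_mul_one_add_pow_isBigO j ω).trans (hstep.mul hUQ)).const_mul_left C)
  filter_upwards [H.ae_isLittleO_sum_mul (he.hasBddCondMoment_one_add_sq_rpow (r := ↑(j + 1))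
    (by linarith [H.one_le_exponent]) (by positivity) (by exact_mod_cast ha)) hsum
    (fun n => Measurable.stronglyMeasurable (by fun_prop)) hco] with ω hrem
  simp only [Real.rpow_natCast] at hrem
  refine (Asymptotics.IsBigO.of_bound' (Eventually.of_forall fun n => ?_)).trans_isLittleO hrem
  exact (abs_sum_le_sum_abs _ _).trans ((sum_le_sum fun k _ => hexp k ω).trans (le_abs_self _))

theorem sum_pow_sub_sqCoeff_isLittleO (R : IsQuadraticRecursion F b e U x G h)
    (he : IsHomoscedasticNoise F μ a σ e) (H : HasGrowthControl F μ s γ b' h' Q)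
    (ha : 2 * ((j + 1) * s) ≤ a)
    (hsum : ∀ᵐ ω ∂μ, (fun n => ∑ k ∈ range n, h' k ω * Q k ω) =O[atTop] clock fun n => h' n ω)
    (hstep : ∀ᵐ ω ∂μ, (fun n => h n ω) =O[atTop] fun n => h' n ω)
    (hstep0 : ∀ᵐ ω ∂μ, Tendsto (fun n => h n ω) atTop (𝓝 0))
    (hUQ : ∀ᵐ ω ∂μ, (fun n => (1 + U n ω) ^ (j + 1)) =O[atTop] fun n => Q n ω) :
    ∀ᵐ ω ∂μ, (fun n => ∑ k ∈ range n, (U k ω ^ (j + 1) - x k ω ^ (j + 1) -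
      σ ^ 2 * sqCoeff j (x k ω) (h k ω) (G k ω ^ 2))) =o[atTop] clock fun n => h' n ω := by
  have hs := H.one_le_exponent
  have hjs : 0 ≤ (j : ℝ) * s := by positivity
  filter_upwards [R.sum_slope_mul_isLittleO he (by linarith) H hstep hUQ,
    R.sum_sqCoeff_mul_isLittleO he H (by linarith) hstep hUQ,
    R.sum_expansion_remainder_isLittleO he H ha hsum hstep hstep0 hUQ,
    R.pow_sub_pow_zero_isLittleO_clock H hUQ] with ω hlin hsq hrem hend
  refine (((hlin.add hsq).add hrem).sub hend).congr_left fun n => ?_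
  rw [← sum_range_sub (fun n => U n ω ^ (j + 1)), ← sum_add_distrib, ← sum_add_distrib,
    ← sum_sub_distrib]
  exact sum_congr rfl fun k _ => by ring

end Drift

end IsQuadraticRecursion

/-- A path `(U, x, k, Γ')` of a quadratic recursion (form, prediction, step, squared slope) agrees
to leading order with the path `(W, h, Γ)`, and `A` is its decrease at prediction to leading
order. -/
structure IsAsymptoticPath (W h A Γ U x k Γ' : ℕ → ℝ) : Prop where
  form : (fun n => U n - W n) =o[atTop] fun n => 1 + W n
  step : (fun n => k n - h n) =o[atTop] h
  decrease : (fun n => U n - x n - A n) =o[atTop] fun n => h n * (1 + W n)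
  decrease_isBigO : A =O[atTop] fun n => h n * (1 + W n)
  slope : (fun n => Γ' n - Γ n) =o[atTop] fun n => h n * (1 + W n)
  slope_isBigO : Γ =O[atTop] fun n => h n * (1 + W n)

lemma isBigO_one_add {W : ℕ → ℝ} (hW : ∀ n, 0 ≤ W n) : W =O[atTop] fun n => 1 + W n :=
  .of_bound' (Eventually.of_forall fun n => by
    have := hW n
    rw [Real.norm_of_nonneg this, Real.norm_of_nonneg (by positivity)]
    linarith)

namespace IsAsymptoticPath

variable {W h A Γ U x k Γ' : ℕ → ℝ}

lemma step_isBigO (P : IsAsymptoticPath W h A Γ U x k Γ') : k =O[atTop] h := by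
  simpa using P.step.isBigO.add (Asymptotics.isBigO_refl h atTop)

lemma one_add_isBigO (P : IsAsymptoticPath W h A Γ U x k Γ') :
    (fun n => 1 + U n) =O[atTop] fun n => 1 + W n :=
  (P.form.isBigO.add (Asymptotics.isBigO_refl _ _)).congr_left fun n => by ring

lemma predicted (P : IsAsymptoticPath W h A Γ U x k Γ') (hh : Tendsto h atTop (𝓝 0)) :
    (fun n => x n - W n) =o[atTop] fun n => 1 + W n := by
  have hdecr : (fun n => U n - x n) =O[atTop] fun n => h n * (1 + W n) := by
    simpa using P.decrease.isBigO.add P.decrease_isBigO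
  have hsmall : (fun n => h n * (1 + W n)) =o[atTop] fun n => 1 + W n := by
    simpa only [one_mul] using ((Asymptotics.isLittleO_one_iff ℝ).2 hh).mul_isBigO
      (Asymptotics.isBigO_refl (fun n => 1 + W n) atTop)
  exact (P.form.sub (hdecr.trans_isLittleO hsmall)).congr_left fun n => by ring

lemma drift_sub_isLittleO (P : IsAsymptoticPath W h A Γ U x k Γ') (hh : Tendsto h atTop (𝓝 0))
    (hW : ∀ n, 0 ≤ W n) (τ : ℝ) (j : ℕ) :
    (fun n => (U n ^ (j + 1) - x n ^ (j + 1) - τ * sqCoeff j (x n) (k n) (Γ' n)) -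
      ((j + 1) * A n * W n ^ j - τ * sqCoeff j (W n) (h n) (Γ n))) =o[atTop]
      fun n => h n * (1 + W n) ^ (j + 1) := by
  have hWO := isBigO_one_add hW
  have hpow : (fun n => h n * (1 + W n) ^ j) =O[atTop] fun n => h n * (1 + W n) ^ (j + 1) := by
    refine (Asymptotics.isBigO_refl h atTop).mul (.of_bound' (Eventually.of_forall fun n => ?_))
    have := hW n
    rw [Real.norm_of_nonneg (by positivity), Real.norm_of_nonneg (by positivity)]
    exact pow_le_pow_right₀ (by linarith) j.le_succ
  refine ((pow_succ_sub_pow_succ_isLittleO j P.form (P.predicted hh) hWO P.decrease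
    P.decrease_isBigO).sub (((sqCoeff_sub_sqCoeff_isLittleO j (P.predicted hh) hWO P.step P.slope
      P.slope_isBigO).trans_isBigO hpow).const_mul_left τ)).congr_left fun n => by ring

end IsAsymptoticPath

theorem IsQuadraticRecursion.sum_drift_isLittleO [IsProbabilityMeasure μ]
    {a σ b b' s γ : ℝ} {j : ℕ} {e W h A Γ U x G k : ℕ → Ω → ℝ}
    (R : IsQuadraticRecursion F b e U x G k)
    (he : IsHomoscedasticNoise F μ a σ e)
    (H : HasGrowthControl F μ s γ b' h fun n ω => (1 + W n ω) ^ (j + 1))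
    (ha : 2 * ((j + 1) * s) ≤ a)
    (hsum : ∀ᵐ ω ∂μ, (fun n => ∑ k ∈ range n, h k ω * (1 + W k ω) ^ (j + 1)) =O[atTop]
      clock fun n => h n ω)
    (hW : ∀ n ω, 0 ≤ W n ω) (hh : ∀ᵐ ω ∂μ, Tendsto (fun n => h n ω) atTop (𝓝 0))
    (hP : ∀ᵐ ω ∂μ, IsAsymptoticPath (W · ω) (h · ω) (A · ω) (Γ · ω) (U · ω) (x · ω) (k · ω)
      fun n => G n ω ^ 2) :
    ∀ᵐ ω ∂μ, (fun n => ∑ k ∈ range n, ((j + 1) * A k ω * W k ω ^ j -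
      σ ^ 2 * sqCoeff j (W k ω) (h k ω) (Γ k ω))) =o[atTop] clock fun n => h n ω := by
  have hdrift := R.sum_pow_sub_sqCoeff_isLittleO he H ha hsum (hP.mono fun ω P => P.step_isBigO)
    (by filter_upwards [hP, hh] with ω P hh using P.step_isBigO.trans_tendsto hh)
    (hP.mono fun ω P => P.one_add_isBigO.pow _)
  filter_upwards [hdrift, hP, hh, H.tendsto_clock, hsum] with ω hdrift P hh htop hsum
  refine (hdrift.sub (isLittleO_sum_clock (H.nonneg · ω) (H.one_le · ω) htop hsum
    (P.drift_sub_isLittleO hh (hW · ω) (σ ^ 2) j))).congr_left fun n => ?_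
  rw [← sum_sub_distrib]
  exact sum_congr rfl fun k _ => by ring

/-- Two quadratic recursions driven by the same noise whose paths agree to leading order, but which
decrease differently at prediction: `W` by the proportion `h / d`, and `V` by the squared slope. -/
structure IsRecursionPair (F : Filtration ℕ m0) (μ : Measure Ω) (d b b' : ℝ)
    (e W x G h V y g f : ℕ → Ω → ℝ) : Prop where
  dim_pos : 0 < d
  fst : IsQuadraticRecursion F b e W x G h
  snd : IsQuadraticRecursion F b' e V y g f
  predicted_eq : ∀ n ω, x n ω = (1 - d⁻¹ * h n ω) * W n ω
  tendsto_clock : ∀ᵐ ω ∂μ, Tendsto (clock fun n => h n ω) atTop atTop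
  tendsto_step : ∀ᵐ ω ∂μ, Tendsto (fun n => h n ω) atTop (𝓝 0)
  isAsymptoticPath : ∀ᵐ ω ∂μ, IsAsymptoticPath (W · ω) (h · ω) (fun n => G n ω ^ 2)
    (fun n => G n ω ^ 2) (V · ω) (y · ω) (f · ω) fun n => g n ω ^ 2

namespace IsRecursionPair

variable {a σ d b b' : ℝ} {e W x G h V y g f : ℕ → Ω → ℝ}

lemma isAsymptoticPath_fst (P : IsRecursionPair F μ d b b' e W x G h V y g f) (ω : Ω) :
    IsAsymptoticPath (W · ω) (h · ω) (fun n => d⁻¹ * (h n ω * W n ω)) (fun n => G n ω ^ 2) (W · ω)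
      (x · ω) (h · ω) fun n => G n ω ^ 2 where
  form := by simp
  step := by simp
  decrease := (Asymptotics.isLittleO_zero _ _).congr_left fun n => by
    rw [P.predicted_eq]; ring
  decrease_isBigO := ((Asymptotics.isBigO_refl _ _).mul
    (isBigO_one_add (P.fst.nonneg · ω))).const_mul_left _
  slope := by simp
  slope_isBigO := by
    refine .of_bound' (Eventually.of_forall fun n => ?_)
    have hW := P.fst.nonneg n ω
    have hh := P.fst.step_nonneg n ω
    rw [Real.norm_of_nonneg (sq_nonneg _), Real.norm_of_nonneg (by positivity)]
    refine (P.fst.slope_sq_le n ω).trans ?_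
    gcongr
    linarith [P.fst.predicted_le n ω]

variable [IsProbabilityMeasure μ]

lemma exists_hasGrowthControl (P : IsRecursionPair F μ d b b' e W x G h V y g f)
    (he : IsHomoscedasticNoise F μ a σ e) {j : ℕ} (ha : 2 * ((j : ℝ) + 1) < a) :
    ∃ s γ, HasGrowthControl F μ s γ b h (fun n ω => (1 + W n ω) ^ (j + 1)) ∧
      2 * ((j + 1) * s) ≤ a ∧ ∀ᵐ ω ∂μ, (fun n => ∑ k ∈ range n, h k ω * (1 + W k ω) ^ (j + 1))
        =O[atTop] clock fun n => h n ω := by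
  have : (0 : ℝ) ≤ j := j.cast_nonneg
  have hc := inv_pos.2 P.dim_pos
  have hcontr (n : ℕ) (ω : Ω) := (P.predicted_eq n ω).le
  obtain ⟨s, γ, H, hs⟩ := P.fst.exists_hasGrowthControl he hc hcontr P.tendsto_clock
    (by linarith : (1 : ℝ) ≤ j + 1) ha
  have hsum := P.fst.sum_isBigO_clock he hc hcontr (by linarith) (by linarith) hs H
  simp only [← Nat.cast_succ, Real.rpow_natCast] at H hsum
  exact ⟨s, γ, H, hs, hsum⟩

lemma sum_drift_isLittleO (P : IsRecursionPair F μ d b b' e W x G h V y g f)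
    (he : IsHomoscedasticNoise F μ a σ e) {j : ℕ} (ha : 2 * ((j : ℝ) + 1) < a) :
    ∀ᵐ ω ∂μ, (fun n => ∑ k ∈ range n, ((j + 1) * (d⁻¹ * (h k ω * W k ω)) * W k ω ^ j -
        σ ^ 2 * sqCoeff j (W k ω) (h k ω) (G k ω ^ 2))) =o[atTop] (clock fun n => h n ω) ∧
      (fun n => ∑ k ∈ range n, ((j + 1) * G k ω ^ 2 * W k ω ^ j -
        σ ^ 2 * sqCoeff j (W k ω) (h k ω) (G k ω ^ 2))) =o[atTop] clock fun n => h n ω := by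
  obtain ⟨s, γ, H, hs, hsum⟩ := P.exists_hasGrowthControl he ha
  exact (P.fst.sum_drift_isLittleO he H hs hsum P.fst.nonneg P.tendsto_step
    (ae_of_all _ P.isAsymptoticPath_fst)).and (P.snd.sum_drift_isLittleO he H hs hsum P.fst.nonneg
      P.tendsto_step P.isAsymptoticPath)

/-- Comparing the drifts of the two forms determines the sums weighted by the squared slope. -/
lemma sum_sub_sum_slope_isLittleO (P : IsRecursionPair F μ d b b' e W x G h V y g f)
    (he : IsHomoscedasticNoise F μ a σ e) {j : ℕ} (ha : 2 * ((j : ℝ) + 1) < a) :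
    ∀ᵐ ω ∂μ, (fun n => ∑ k ∈ range n, (d⁻¹ * (h k ω * W k ω ^ (j + 1)) -
      G k ω ^ 2 * W k ω ^ j)) =o[atTop] clock fun n => h n ω := by
  filter_upwards [P.sum_drift_isLittleO he ha] with ω ⟨hfst, hsnd⟩
  refine ((hfst.sub hsnd).const_mul_left ((j : ℝ) + 1)⁻¹).congr_left fun n => ?_
  rw [← sum_sub_distrib, mul_sum]
  refine sum_congr rfl fun k _ => ?_
  field_simp
  ring

lemma sum_succ_sub_isLittleO (P : IsRecursionPair F μ d b b' e W x G h V y g f)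
    (he : IsHomoscedasticNoise F μ a σ e) {j : ℕ} (ha : 2 * ((j : ℝ) + 1) < a) :
    ∀ᵐ ω ∂μ, (fun n => ∑ k ∈ range n, h k ω * W k ω ^ (j + 1) -
      σ ^ 2 * (d + 2 * j) * ∑ k ∈ range n, h k ω * W k ω ^ j) =o[atTop]
        clock fun n => h n ω := by
  have hd := P.dim_pos.ne'
  rcases j with _ | i
  · filter_upwards [P.sum_drift_isLittleO he ha] with ω ⟨hfst, _⟩
    refine (hfst.const_mul_left d).congr_left fun n => ?_
    rw [mul_sum, mul_sum, ← sum_sub_distrib]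
    refine sum_congr rfl fun k _ => ?_
    simp only [sqCoeff]
    push_cast
    field_simp
    ring
  · have hi : 2 * ((i : ℝ) + 1) < a := by push_cast at ha; linarith
    filter_upwards [P.sum_drift_isLittleO he ha, P.sum_sub_sum_slope_isLittleO he hi]
      with ω ⟨hfst, _⟩ hslope
    refine ((hfst.const_mul_left (d / (↑(i + 1) + 1))).sub
      (hslope.const_mul_left (σ ^ 2 * d * (2 * ↑(i + 1))))).congr_left fun n => ?_
    rw [mul_sum, mul_sum, mul_sum, ← sum_sub_distrib, ← sum_sub_distrib]
    refine sum_congr rfl fun k _ => ?_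
    simp only [sqCoeff, Nat.add_sub_cancel]
    field_simp
    push_cast
    ring

theorem tendsto_sum_div_clock (P : IsRecursionPair F μ d b b' e W x G h V y g f)
    (he : IsHomoscedasticNoise F μ a σ e) {p : ℕ} (ha : 2 * (p : ℝ) < a) :
    ∀ᵐ ω ∂μ, Tendsto (fun n => (∑ k ∈ range n, h k ω * W k ω ^ p) / clock (fun n => h n ω) n)
      atTop (𝓝 (∏ j ∈ range p, σ ^ 2 * (d + 2 * j))) := by
  induction p with
  | zero =>
    filter_upwards [P.tendsto_clock, P.tendsto_step] with ω htop hstep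
    have hrest : Tendsto (fun n => (1 + h n ω) / clock (fun n => h n ω) n) atTop (𝓝 0) :=
      (tendsto_const_nhds.add hstep).div_atTop htop
    rw [range_zero, prod_empty, ← sub_zero (1 : ℝ)]
    refine (hrest.const_sub 1).congr fun n => ?_
    have hclock := one_pos.trans_le (one_le_clock (P.fst.step_nonneg · ω) n)
    rw [eq_div_iff hclock.ne', sub_mul, div_mul_cancel₀ _ hclock.ne', clock, sum_range_succ]
    simp only [pow_zero, mul_one]
    ring
  | succ j ih =>
    have hj : 2 * ((j : ℝ) + 1) < a := by exact_mod_cast ha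
    filter_upwards [ih (by linarith), P.sum_succ_sub_isLittleO he hj] with ω ih hsucc
    rw [prod_range_succ, ← add_zero (_ * _)]
    refine ((ih.mul_const _).add hsucc.tendsto_div_nhds_zero).congr fun n => ?_
    ring

theorem tendsto_sum_div_clock_of_isLittleO (P : IsRecursionPair F μ d b b' e W x G h V y g f)
    (he : IsHomoscedasticNoise F μ a σ e) {j : ℕ} (ha : 2 * ((j : ℝ) + 1) < a)
    {k D : ℕ → Ω → ℝ} (hk : ∀ᵐ ω ∂μ, (fun n => k n ω - h n ω) =o[atTop] fun n => h n ω)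
    (hD : ∀ᵐ ω ∂μ, (fun n => D n ω - W n ω) =o[atTop] fun n => 1 + W n ω) :
    ∀ᵐ ω ∂μ, Tendsto (fun n => (∑ i ∈ range n, k i ω * D i ω ^ (j + 1)) /
      clock (fun n => h n ω) n) atTop (𝓝 (∏ i ∈ range (j + 1), σ ^ 2 * (d + 2 * i))) := by
  obtain ⟨s, γ, H, -, hsum⟩ := P.exists_hasGrowthControl he ha
  filter_upwards [P.tendsto_sum_div_clock he (p := j + 1) (by exact_mod_cast ha), hk, hD,
    P.tendsto_clock, hsum] with ω hlim hk hD htop hsum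
  have hWO := isBigO_one_add (P.fst.nonneg · ω)
  have hterm := mul_sub_mul_isLittleO hk (Asymptotics.isBigO_refl _ _)
    (pow_sub_pow_isLittleO hD hWO (j + 1)) (hWO.pow (j + 1))
  have hdiff := isLittleO_sum_clock (H.nonneg · ω) (H.one_le · ω) htop hsum hterm
  rw [← add_zero (∏ i ∈ range (j + 1), _)]
  refine (hlim.add hdiff.tendsto_div_nhds_zero).congr fun n => ?_
  rw [← add_div, ← sum_add_distrib]
  simp only [add_sub_cancel]

end IsRecursionPair

end QuadraticRecursion

/-! ### Quadratic forms of positive matrices -/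

section PositiveMatrix

variable {ι : Type*} [Fintype ι] [DecidableEq ι] {A Λ : Matrix ι ι ℝ}

lemma toBilin'_self_nonneg (hA : A.PosSemidef) (x : ι → ℝ) : 0 ≤ A.toBilin' x x := by
  simpa [toBilin'_apply'] using hA.dotProduct_mulVec_nonneg x

lemma isSymm_toBilin' (hA : A.PosSemidef) : A.toBilin'.IsSymm :=
  isSymm_toBilin'_iff_isSymm.2 (by
    simpa [Matrix.IsSymm, IsHermitian, conjTranspose_eq_transpose_of_trivial] using hA.isHermitian)

lemma toBilin'_sq_le (hA : A.PosSemidef) (x y : ι → ℝ) :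
    A.toBilin' x y ^ 2 ≤ A.toBilin' x x * A.toBilin' y y :=
  A.toBilin'.apply_sq_le_of_symm (toBilin'_self_nonneg hA)
    (LinearMap.BilinForm.isSymm_iff.1 (isSymm_toBilin' hA)) x y

lemma sq_apply_le_toBilin' (hΛ : Λ.PosDef) (x : ι → ℝ) (i : ι) :
    x i ^ 2 ≤ Λ⁻¹ i i * Λ.toBilin' x x := by
  have hcol : Λ *ᵥ Λ⁻¹.col i = Pi.single i 1 := by
    rw [← mulVec_single_one, mulVec_mulVec, mul_nonsing_inv _ hΛ.det_pos.ne'.isUnit, one_mulVec]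
  have hcs := toBilin'_sq_le hΛ.posSemidef x (Λ⁻¹.col i)
  rw [toBilin'_apply', toBilin'_apply' Λ (Λ⁻¹.col i), hcol] at hcs
  simpa [mul_comm] using hcs

lemma tendsto_matrix_inv {l : Filter ℕ} {P : ℕ → Matrix ι ι ℝ} (hP : Tendsto P l (𝓝 A))
    (hA : A.det ≠ 0) : Tendsto (fun n => (P n)⁻¹) l (𝓝 A⁻¹) :=
  (continuousAt_matrix_inv A (by simpa using continuousAt_inv₀ hA)).tendsto.comp hP

lemma stronglyMeasurable_matrix_inv {Ω : Type*} {m : MeasurableSpace Ω} {P : Ω → Matrix ι ι ℝ}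
    (hP : StronglyMeasurable P) : StronglyMeasurable fun ω => (P ω)⁻¹ := by
  simp only [Matrix.inv_def, Ring.inverse_eq_inv']
  have hdet := ((continuous_id.matrix_det).comp_stronglyMeasurable hP).measurable.inv
  exact hdet.stronglyMeasurable.smul ((continuous_id.matrix_adjugate).comp_stronglyMeasurable hP)

lemma stronglyMeasurable_toBilin' {Ω : Type*} {m : MeasurableSpace Ω} {P : Ω → Matrix ι ι ℝ}
    {x y : Ω → ι → ℝ} (hP : StronglyMeasurable P) (hx : StronglyMeasurable x)
    (hy : StronglyMeasurable y) : StronglyMeasurable fun ω => (P ω).toBilin' (x ω) (y ω) := by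
  simp only [toBilin'_apply']
  have : Continuous fun q : Matrix ι ι ℝ × (ι → ℝ) × (ι → ℝ) => q.2.1 ⬝ᵥ (q.1 *ᵥ q.2.2) :=
    continuous_snd.fst.dotProduct (continuous_fst.matrix_mulVec continuous_snd.snd)
  exact this.comp_stronglyMeasurable (hP.prodMk (hx.prodMk hy))

lemma toBilin'_sub_isLittleO (hΛ : Λ.PosDef) {P : ℕ → Matrix ι ι ℝ} {c : ℕ → ℝ} {l : Filter ℕ}
    (hc : ∀ n, 0 < c n) (hP : Tendsto (fun n => c n • P n) l (𝓝 Λ)) (x y : ℕ → ι → ℝ) :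
    (fun n => (P n).toBilin' (x n) (y n) - ((c n)⁻¹ • Λ).toBilin' (x n) (y n)) =o[l] fun n =>
      √(((c n)⁻¹ • Λ).toBilin' (x n) (x n)) * √(((c n)⁻¹ • Λ).toBilin' (y n) (y n)) := by
  have hcoord (z : ℕ → ι → ℝ) (i : ι) : (fun n => z n i) =O[l] fun n =>
      √(Λ.toBilin' (z n) (z n)) := by
    refine .of_bound √(Λ⁻¹ i i) (Eventually.of_forall fun n => ?_)
    rw [Real.norm_of_nonneg (Real.sqrt_nonneg _), ← Real.sqrt_mul hΛ.inv.posSemidef.diag_nonneg]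
    exact Real.abs_le_sqrt (sq_apply_le_toBilin' hΛ (z n) i)
  have hentry (i j : ι) : (fun n => c n * P n i j - Λ i j) =o[l] fun _ => (1 : ℝ) :=
    (Asymptotics.isLittleO_one_iff ℝ).2 (tendsto_sub_nhds_zero_iff.2
      (((continuous_id.matrix_elem i j).tendsto Λ).comp hP))
  have hsum := Asymptotics.IsLittleO.fun_sum fun i (_ : i ∈ univ) =>
    Asymptotics.IsLittleO.fun_sum fun j (_ : j ∈ univ) =>
      (((hentry i j).mul_isBigO (hcoord x i)).mul_isBigO (hcoord y j))
  refine ((Asymptotics.isBigO_refl (fun n => (c n)⁻¹) l).mul_isLittleO hsum).congr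
    (fun n => ?_) fun n => ?_
  · have := (hc n).ne'
    simp only [toBilin'_apply, ← sum_sub_distrib, mul_sum, Matrix.smul_apply, smul_eq_mul]
    exact sum_congr rfl fun i _ => sum_congr rfl fun j _ => by field_simp
  · have hinv := (inv_pos.2 (hc n)).le
    simp only [map_smul, LinearMap.smul_apply, smul_eq_mul, Real.sqrt_mul hinv, one_mul]
    nth_rw 1 [← Real.mul_self_sqrt hinv]
    ring

lemma toBilin'_self_sub_isLittleO (hΛ : Λ.PosDef) {P : ℕ → Matrix ι ι ℝ} {c : ℕ → ℝ}
    {l : Filter ℕ} (hc : ∀ n, 0 < c n) (hP : Tendsto (fun n => c n • P n) l (𝓝 Λ))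
    (x : ℕ → ι → ℝ) :
    (fun n => (P n).toBilin' (x n) (x n) - ((c n)⁻¹ • Λ).toBilin' (x n) (x n)) =o[l] fun n =>
      ((c n)⁻¹ • Λ).toBilin' (x n) (x n) :=
  (toBilin'_sub_isLittleO hΛ hc hP x x).congr_right fun n =>
    Real.mul_self_sqrt (toBilin'_self_nonneg (hΛ.posSemidef.smul (inv_pos.2 (hc n)).le) _)

lemma toBilin'_sq_sub_sq_isLittleO (hΛ : Λ.PosDef) {P : ℕ → Matrix ι ι ℝ} {c : ℕ → ℝ}
    {l : Filter ℕ} (hc : ∀ n, 0 < c n) (hP : Tendsto (fun n => c n • P n) l (𝓝 Λ))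
    (x y : ℕ → ι → ℝ) :
    (fun n => (P n).toBilin' (x n) (y n) ^ 2 - ((c n)⁻¹ • Λ).toBilin' (x n) (y n) ^ 2) =o[l]
      fun n => ((c n)⁻¹ • Λ).toBilin' (x n) (x n) * ((c n)⁻¹ • Λ).toBilin' (y n) (y n) := by
  have hpos (n : ℕ) := hΛ.posSemidef.smul (inv_pos.2 (hc n)).le
  refine (pow_sub_pow_isLittleO (toBilin'_sub_isLittleO hΛ hc hP x y) ?_ 2).congr_right fun n => ?_
  · refine .of_bound' (Eventually.of_forall fun n => ?_)
    rw [← Real.sqrt_mul (toBilin'_self_nonneg (hpos n) _), Real.norm_of_nonneg (Real.sqrt_nonneg _)]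
    exact Real.abs_le_sqrt (toBilin'_sq_le (hpos n) _ _)
  · rw [mul_pow, Real.sq_sqrt (toBilin'_self_nonneg (hpos n) _),
      Real.sq_sqrt (toBilin'_self_nonneg (hpos n) _)]

end PositiveMatrix

section RankOneUpdate

lemma posSemidef_vecMulVec_self {ι : Type*} [Finite ι] (φ : ι → ℝ) :
    (vecMulVec φ φ).PosSemidef := by
  simpa using posSemidef_vecMulVec_self_star φ

variable {ι : Type*} [Fintype ι] [DecidableEq ι] {T : Matrix ι ι ℝ}

lemma toBilin'_vecMulVec (u v x y : ι → ℝ) :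
    (vecMulVec u v).toBilin' x y = (x ⬝ᵥ u) * (v ⬝ᵥ y) := by
  simp [toBilin'_apply', vecMulVec_mulVec, mul_comm]

lemma toBilin'_inv_eq_add (hT : T.PosDef) (φ x y : ι → ℝ) :
    T⁻¹.toBilin' x y = (T + vecMulVec φ φ)⁻¹.toBilin' x y +
      (T + vecMulVec φ φ)⁻¹.toBilin' x φ * T⁻¹.toBilin' φ y := by
  have hT' := hT.add_posSemidef (posSemidef_vecMulVec_self φ)
  have hinv : T⁻¹ = (T + vecMulVec φ φ)⁻¹ + (T + vecMulVec φ φ)⁻¹ * vecMulVec φ φ * T⁻¹ := by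
    have hsub := Matrix.inv_sub_inv (A := T + vecMulVec φ φ) (B := T)
      (by simp only [hT.isUnit, hT'.isUnit])
    rw [sub_add_cancel_left, Matrix.mul_neg, Matrix.neg_mul] at hsub
    rw [← neg_eq_iff_eq_neg.2 hsub]
    abel
  conv_lhs => rw [hinv]
  simp only [map_add, LinearMap.add_apply, toBilin'_apply', ← mulVec_mulVec, vecMulVec_mulVec,
    mulVec_smul, dotProduct_smul, op_smul_eq_smul, smul_eq_mul, mul_comm]

lemma toBilin'_inv_add_vecMulVec_self_lt_one (hT : T.PosDef) (φ : ι → ℝ) :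
    (T + vecMulVec φ φ)⁻¹.toBilin' φ φ < 1 := by
  have hnonneg := toBilin'_self_nonneg hT.inv.posSemidef φ
  have hinv : (1 - (T + vecMulVec φ φ)⁻¹.toBilin' φ φ) * (1 + T⁻¹.toBilin' φ φ) = 1 := by
    linear_combination toBilin'_inv_eq_add hT φ φ φ
  exact sub_pos.1 (pos_of_mul_pos_left (hinv.symm ▸ one_pos) (by positivity))

lemma one_sub_mul_toBilin'_inv (hT : T.PosDef) (φ y : ι → ℝ) :
    (1 - (T + vecMulVec φ φ)⁻¹.toBilin' φ φ) * T⁻¹.toBilin' φ y =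
      (T + vecMulVec φ φ)⁻¹.toBilin' φ y := by
  linear_combination toBilin'_inv_eq_add hT φ φ y

lemma toBilin'_inv_self_sub (hT : T.PosDef) (φ x : ι → ℝ) :
    T⁻¹.toBilin' x x - (T + vecMulVec φ φ)⁻¹.toBilin' x x =
      (1 - (T + vecMulVec φ φ)⁻¹.toBilin' φ φ)⁻¹ * (T + vecMulVec φ φ)⁻¹.toBilin' φ x ^ 2 := by
  have := (sub_pos.2 (toBilin'_inv_add_vecMulVec_self_lt_one hT φ)).ne'
  have hT' := hT.add_posSemidef (posSemidef_vecMulVec_self φ)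
  rw [toBilin'_inv_eq_add hT φ x x, (isSymm_toBilin' hT'.inv.posSemidef).eq x φ,
    ← one_sub_mul_toBilin'_inv hT φ x]
  field_simp
  ring

lemma toBilin'_add_vecMulVec_mulVec_inv (hT : T.PosDef) (φ x : ι → ℝ) :
    (T + vecMulVec φ φ).toBilin' (T⁻¹ *ᵥ x) (T⁻¹ *ᵥ x) = T⁻¹.toBilin' x x +
      ((1 - (T + vecMulVec φ φ)⁻¹.toBilin' φ φ)⁻¹ * (T + vecMulVec φ φ)⁻¹.toBilin' φ x) ^ 2 := by
  have hpos := (sub_pos.2 (toBilin'_inv_add_vecMulVec_self_lt_one hT φ)).ne'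
  rw [← one_sub_mul_toBilin'_inv hT φ x, inv_mul_cancel_left₀ hpos, map_add, LinearMap.add_apply,
    LinearMap.add_apply, toBilin'_vecMulVec, toBilin'_apply', mulVec_mulVec,
    mul_nonsing_inv _ hT.det_pos.ne'.isUnit, one_mulVec, dotProduct_comm, ← toBilin'_apply',
    dotProduct_comm _ φ, ← toBilin'_apply', sq]

end RankOneUpdate

/-! ### Gram matrices of a regression design -/

section Design

variable {ι : Type*}

/-- The Gram matrix `S + ∑_{k < n} φ_k φ_kᵗ` of a path `φ`; the matrix `S_n` of the regression is
its value at `n + 1`. -/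
def designGram (S : Matrix ι ι ℝ) (φ : ℕ → ι → ℝ) (n : ℕ) : Matrix ι ι ℝ :=
  S + ∑ k ∈ range n, vecMulVec (φ k) (φ k)

variable {S Λ L : Matrix ι ι ℝ} {φ : ℕ → ι → ℝ}

lemma designGram_succ (S : Matrix ι ι ℝ) (φ : ℕ → ι → ℝ) (n : ℕ) :
    designGram S φ (n + 1) = designGram S φ n + vecMulVec (φ n) (φ n) := by
  rw [designGram, designGram, sum_range_succ, add_assoc]

lemma posDef_designGram [Finite ι] (hS : S.PosDef) (φ : ℕ → ι → ℝ) (n : ℕ) :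
    (designGram S φ n).PosDef :=
  hS.add_posSemidef (posSemidef_sum _ fun k _ => posSemidef_vecMulVec_self (φ k))

variable [Fintype ι]

/-- The scalar order of growth `1 + (dim)⁻¹ ∑_{k < n} φ_kᵗ Λ φ_k` of the Gram matrices of `φ`, which
behave like multiples of `Λ⁻¹`. -/
def gramScale (Λ : Matrix ι ι ℝ) (φ : ℕ → ι → ℝ) (n : ℕ) : ℝ :=
  1 + (Fintype.card ι : ℝ)⁻¹ * ∑ k ∈ range n, φ k ⬝ᵥ (Λ *ᵥ φ k)

/-- The surrogate of the inverse Gram matrix, a scalar multiple of the limit `Λ`. -/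
def scaledForm (Λ : Matrix ι ι ℝ) (φ : ℕ → ι → ℝ) (n : ℕ) : Matrix ι ι ℝ :=
  (gramScale Λ φ n)⁻¹ • Λ

lemma gramScale_pos (hΛ : Λ.PosSemidef) (φ : ℕ → ι → ℝ) (n : ℕ) : 0 < gramScale Λ φ n := by
  classical
  have hsum : 0 ≤ ∑ k ∈ range n, φ k ⬝ᵥ (Λ *ᵥ φ k) := sum_nonneg fun k _ => by
    simpa only [toBilin'_apply'] using toBilin'_self_nonneg hΛ (φ k)
  rw [gramScale]
  positivity

lemma posSemidef_scaledForm (hΛ : Λ.PosSemidef) (φ : ℕ → ι → ℝ) (n : ℕ) :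
    (scaledForm Λ φ n).PosSemidef :=
  hΛ.smul (inv_nonneg.2 (gramScale_pos hΛ φ n).le)

variable [DecidableEq ι]

lemma gramScale_succ (Λ : Matrix ι ι ℝ) (φ : ℕ → ι → ℝ) (n : ℕ) : gramScale Λ φ (n + 1) =
    gramScale Λ φ n + (Fintype.card ι : ℝ)⁻¹ * Λ.toBilin' (φ n) (φ n) := by
  rw [gramScale, gramScale, sum_range_succ, mul_add, add_assoc, toBilin'_apply']

lemma one_sub_scaledForm_self [Nonempty ι] (hΛ : Λ.PosSemidef) (φ : ℕ → ι → ℝ) (n : ℕ) :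
    1 - (Fintype.card ι : ℝ)⁻¹ * (scaledForm Λ φ (n + 1)).toBilin' (φ n) (φ n) =
      gramScale Λ φ n / gramScale Λ φ (n + 1) := by
  have hscale := (gramScale_pos hΛ φ (n + 1)).ne'
  rw [scaledForm, map_smul, LinearMap.smul_apply, LinearMap.smul_apply, smul_eq_mul,
    eq_div_iff hscale, eq_sub_of_add_eq (gramScale_succ Λ φ n).symm]
  field_simp

lemma scaledForm_succ [Nonempty ι] (hΛ : Λ.PosSemidef) (φ : ℕ → ι → ℝ) (n : ℕ) (x y : ι → ℝ) :
    (scaledForm Λ φ (n + 1)).toBilin' x y =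
      (1 - (Fintype.card ι : ℝ)⁻¹ * (scaledForm Λ φ (n + 1)).toBilin' (φ n) (φ n)) *
        (scaledForm Λ φ n).toBilin' x y := by
  have hscale := (gramScale_pos hΛ φ n).ne'
  rw [one_sub_scaledForm_self hΛ, scaledForm, scaledForm]
  simp only [map_smul, LinearMap.smul_apply, smul_eq_mul]
  field_simp

lemma scaledForm_self_le_card [Nonempty ι] (hΛ : Λ.PosSemidef) (φ : ℕ → ι → ℝ) (n : ℕ) :
    (scaledForm Λ φ (n + 1)).toBilin' (φ n) (φ n) ≤ Fintype.card ι := by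
  have hnonneg := (div_pos (gramScale_pos hΛ φ n) (gramScale_pos hΛ φ (n + 1))).le
  rwa [← one_sub_scaledForm_self hΛ, sub_nonneg, inv_mul_le_one₀ (by positivity)] at hnonneg

lemma scaledForm_succ_self_le [Nonempty ι] (hΛ : Λ.PosSemidef) (φ : ℕ → ι → ℝ) (n : ℕ)
    (x : ι → ℝ) : (scaledForm Λ φ (n + 1)).toBilin' x x ≤ (scaledForm Λ φ n).toBilin' x x := by
  rw [scaledForm_succ hΛ]
  refine mul_le_of_le_one_left (toBilin'_self_nonneg (posSemidef_scaledForm hΛ φ n) x) ?_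
  have := toBilin'_self_nonneg (posSemidef_scaledForm hΛ φ (n + 1)) (φ n)
  exact sub_le_self _ (by positivity)

lemma designGram_inv_succ_self_le (hS : S.PosDef) (φ : ℕ → ι → ℝ) (n : ℕ) (x : ι → ℝ) :
    (designGram S φ (n + 1))⁻¹.toBilin' x x ≤ (designGram S φ n)⁻¹.toBilin' x x := by
  have hT := posDef_designGram hS φ n
  have hpos := sub_pos.2 (toBilin'_inv_add_vecMulVec_self_lt_one hT (φ n))
  rw [designGram_succ, ← sub_nonneg, toBilin'_inv_self_sub hT]
  positivity

lemma tendsto_inv_smul_designGram [Nonempty ι] (hL : L.PosDef) {α : ℕ → ℝ} (hα : ∀ n, 0 < α n)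
    (hαtop : Tendsto α atTop atTop)
    (hlim : Tendsto (fun n => (α n)⁻¹ • designGram S φ (n + 1)) atTop (𝓝 L)) :
    Tendsto (fun n => gramScale L⁻¹ φ n) atTop atTop ∧
      Tendsto (fun n => (gramScale L⁻¹ φ n)⁻¹ • designGram S φ n) atTop (𝓝 L) := by
  have hdim : (Fintype.card ι : ℝ) ≠ 0 := by positivity
  have htrace (n : ℕ) : (Fintype.card ι : ℝ)⁻¹ * (L⁻¹ * designGram S φ n).trace =
      (Fintype.card ι : ℝ)⁻¹ * (L⁻¹ * S).trace - 1 + gramScale L⁻¹ φ n := by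
    simp only [designGram, gramScale, Matrix.mul_add, trace_add, Matrix.mul_sum, trace_sum,
      mul_vecMulVec, trace_vecMulVec, dotProduct_comm]
    ring
  have hratio : Tendsto (fun n => (α n)⁻¹ * gramScale L⁻¹ φ (n + 1)) atTop (𝓝 1) := by
    have hcont : Continuous fun T : Matrix ι ι ℝ => (Fintype.card ι : ℝ)⁻¹ * (L⁻¹ * T).trace :=
      continuous_const.mul (continuous_const.matrix_mul continuous_id).matrix_trace
    have hconst := (tendsto_inv_atTop_zero.comp hαtop).mul_const
      ((Fintype.card ι : ℝ)⁻¹ * (L⁻¹ * S).trace - 1)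
    have hsub := ((hcont.tendsto L).comp hlim).sub hconst
    rw [nonsing_inv_mul _ hL.det_pos.ne'.isUnit, trace_one, inv_mul_cancel₀ hdim, zero_mul,
      sub_zero] at hsub
    refine hsub.congr fun n => ?_
    simp only [Function.comp, Matrix.mul_smul, trace_smul, smul_eq_mul]
    linear_combination (α n)⁻¹ * htrace (n + 1)
  have hscale : Tendsto (fun n => gramScale L⁻¹ φ (n + 1)) atTop atTop :=
    (hαtop.atTop_mul_pos one_pos hratio).congr fun n => mul_inv_cancel_left₀ (hα n).ne' _
  refine ⟨(tendsto_add_atTop_iff_nat 1).1 hscale, (tendsto_add_atTop_iff_nat 1).1 ?_⟩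
  have hsmul := (hratio.inv₀ one_ne_zero).smul hlim
  rw [inv_one, one_smul] at hsmul
  refine hsmul.congr fun n => ?_
  rw [smul_smul, mul_inv, inv_inv, mul_right_comm, mul_inv_cancel₀ (hα n).ne', one_mul]

/-- A design path with initial matrix `S` whose Gram matrices, normalized by their scale, tend to
`L`, whose scale explodes and whose explosion coefficient vanishes in the limit. -/
structure IsStableDesign (S L : Matrix ι ι ℝ) (φ : ℕ → ι → ℝ) : Prop where
  posDef_init : S.PosDef
  posDef_limit : L.PosDef
  tendsto_scale : Tendsto (gramScale L⁻¹ φ) atTop atTop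
  tendsto_gram : Tendsto (fun n => (gramScale L⁻¹ φ n)⁻¹ • designGram S φ n) atTop (𝓝 L)
  tendsto_explosion :
    Tendsto (fun n => (designGram S φ (n + 1))⁻¹.toBilin' (φ n) (φ n)) atTop (𝓝 0)

lemma neg_log_one_sub_isEquivalent {α : Type*} {u : α → ℝ} {l : Filter α}
    (hu : Tendsto u l (𝓝 0)) :
    Asymptotics.IsEquivalent l (fun n => -Real.log (1 - u n)) u := by
  have hderiv : HasDerivAt (fun x : ℝ => -Real.log (1 - x)) 1 0 := by
    simpa using (((hasDerivAt_id (0 : ℝ)).const_sub 1).log (by norm_num)).fun_neg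
  exact (hderiv.isLittleO.comp_tendsto hu).congr (fun n => by simp) fun n => by simp

lemma clock_isEquivalent_log_gramScale [Nonempty ι] (hΛ : Λ.PosSemidef)
    (htop : Tendsto (gramScale Λ φ) atTop atTop)
    (hstep : Tendsto (fun n => (scaledForm Λ φ (n + 1)).toBilin' (φ n) (φ n)) atTop (𝓝 0)) :
    Asymptotics.IsEquivalent atTop (clock fun n => (scaledForm Λ φ (n + 1)).toBilin' (φ n) (φ n))
      fun n => Fintype.card ι * Real.log (gramScale Λ φ n) := by
  set h := fun n => (scaledForm Λ φ (n + 1)).toBilin' (φ n) (φ n)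
  have hlog : Tendsto (fun n => Real.log (gramScale Λ φ n)) atTop atTop :=
    Real.tendsto_log_atTop.comp htop
  have hterm (n : ℕ) : -Real.log (1 - (Fintype.card ι : ℝ)⁻¹ * h n) =
      Real.log (gramScale Λ φ (n + 1)) - Real.log (gramScale Λ φ n) := by
    rw [one_sub_scaledForm_self hΛ, Real.log_div (gramScale_pos hΛ φ n).ne'
      (gramScale_pos hΛ φ (n + 1)).ne', neg_sub]
  have hsum (n : ℕ) : ∑ k ∈ range n, -Real.log (1 - (Fintype.card ι : ℝ)⁻¹ * h k) =
      Real.log (gramScale Λ φ n) := by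
    simp only [hterm]
    rw [sum_range_sub fun k => Real.log (gramScale Λ φ k)]
    simp [gramScale]
  have hscaled : Tendsto (fun n => (Fintype.card ι : ℝ)⁻¹ * h n) atTop (𝓝 0) := by
    simpa using hstep.const_mul (Fintype.card ι : ℝ)⁻¹
  have hequiv := Asymptotics.IsLittleO.sum_range
    (neg_log_one_sub_isEquivalent hscaled).symm.isLittleO (fun n => ?_)
    (by simpa only [hsum] using hlog)
  · simp only [hsum, Pi.sub_apply, sum_sub_distrib, ← mul_sum] at hequiv
    have hconst : (fun n => 1 + h n) =o[atTop] fun n =>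
        Fintype.card ι * Real.log (gramScale Λ φ n) :=
      ((hstep.const_add 1).isBigO_one ℝ).trans_isLittleO
        (Asymptotics.isLittleO_const_left.2 (Or.inr (tendsto_norm_atTop_atTop.comp
          (hlog.const_mul_atTop (by positivity)))))
    refine ((hequiv.const_mul_left (Fintype.card ι)).const_mul_right (by positivity)).add hconst
      |>.congr_left fun n => ?_
    rw [Pi.sub_apply, clock, sum_range_succ, mul_sub, mul_inv_cancel_left₀ (by positivity)]
    ring
  · have := toBilin'_self_nonneg (posSemidef_scaledForm hΛ φ (n + 1)) (φ n)
    have hpos := div_pos (gramScale_pos hΛ φ n) (gramScale_pos hΛ φ (n + 1))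
    rw [← one_sub_scaledForm_self hΛ] at hpos
    exact neg_nonneg.2 (Real.log_nonpos hpos.le (sub_le_self _ (by positivity)))

namespace IsStableDesign

lemma tendsto_scale_smul_inv (D : IsStableDesign S L φ) :
    Tendsto (fun n => gramScale L⁻¹ φ n • (designGram S φ n)⁻¹) atTop (𝓝 L⁻¹) := by
  refine (tendsto_matrix_inv D.tendsto_gram D.posDef_limit.det_pos.ne').congr fun n => ?_
  have hscale := (gramScale_pos D.posDef_limit.inv.posSemidef φ n).ne'
  have hdet := (posDef_designGram D.posDef_init φ n).det_pos.ne'.isUnit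
  exact Matrix.inv_eq_left_inv (by
    rw [smul_mul_smul_comm, mul_inv_cancel₀ hscale, nonsing_inv_mul _ hdet, one_smul])

lemma step_sub_isLittleO (D : IsStableDesign S L φ) :
    (fun n => (designGram S φ (n + 1))⁻¹.toBilin' (φ n) (φ n) -
        (scaledForm L⁻¹ φ (n + 1)).toBilin' (φ n) (φ n)) =o[atTop]
      fun n => (scaledForm L⁻¹ φ (n + 1)).toBilin' (φ n) (φ n) :=
  toBilin'_self_sub_isLittleO D.posDef_limit.inv
    (fun n => gramScale_pos D.posDef_limit.inv.posSemidef φ (n + 1))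
    ((tendsto_add_atTop_iff_nat 1).2 D.tendsto_scale_smul_inv) φ

lemma tendsto_step (D : IsStableDesign S L φ) :
    Tendsto (fun n => (scaledForm L⁻¹ φ (n + 1)).toBilin' (φ n) (φ n)) atTop (𝓝 0) :=
  Asymptotics.IsEquivalent.tendsto_nhds D.step_sub_isLittleO D.tendsto_explosion

lemma tendsto_clock [Nonempty ι] (D : IsStableDesign S L φ) :
    Tendsto (clock fun n => (scaledForm L⁻¹ φ (n + 1)).toBilin' (φ n) (φ n)) atTop atTop :=
  (clock_isEquivalent_log_gramScale D.posDef_limit.inv.posSemidef D.tendsto_scale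
    D.tendsto_step).symm.tendsto_atTop
      ((Real.tendsto_log_atTop.comp D.tendsto_scale).const_mul_atTop (by positivity))

lemma clock_isEquivalent_log_det [Nonempty ι] (D : IsStableDesign S L φ) :
    Asymptotics.IsEquivalent atTop
      (clock fun n => (scaledForm L⁻¹ φ (n + 1)).toBilin' (φ n) (φ n))
      fun n => Real.log (designGram S φ n).det := by
  refine (clock_isEquivalent_log_gramScale D.posDef_limit.inv.posSemidef D.tendsto_scale
    D.tendsto_step).trans (Asymptotics.IsEquivalent.symm ?_)
  have hbdd := ((((continuous_id.matrix_det).tendsto L).comp D.tendsto_gram).log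
    D.posDef_limit.det_pos.ne').isBigO_one ℝ
  refine (hbdd.trans_isLittleO (Asymptotics.isLittleO_const_left.2 (Or.inr
    (tendsto_norm_atTop_atTop.comp ((Real.tendsto_log_atTop.comp D.tendsto_scale).const_mul_atTop
      (by positivity : (0 : ℝ) < Fintype.card ι)))))).congr_left fun n => ?_
  have hscale := gramScale_pos D.posDef_limit.inv.posSemidef φ n
  have hdet := (posDef_designGram D.posDef_init φ n).det_pos
  simp only [Function.comp, id, Pi.sub_apply, det_smul]
  rw [Real.log_mul (by positivity) hdet.ne', Real.log_pow, Real.log_inv]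
  ring

lemma step_mul_form_isBigO [Nonempty ι] (D : IsStableDesign S L φ) (x : ℕ → ι → ℝ) :
    (fun n => (scaledForm L⁻¹ φ (n + 1)).toBilin' (φ n) (φ n) *
        (scaledForm L⁻¹ φ (n + 1)).toBilin' (x n) (x n)) =O[atTop] fun n =>
      (scaledForm L⁻¹ φ (n + 1)).toBilin' (φ n) (φ n) *
        (1 + (scaledForm L⁻¹ φ n).toBilin' (x n) (x n)) := by
  have hΛ := D.posDef_limit.inv.posSemidef
  refine (Asymptotics.isBigO_refl _ _).mul (.of_bound' (Eventually.of_forall fun n => ?_))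
  have hnonneg := toBilin'_self_nonneg (posSemidef_scaledForm hΛ φ (n + 1)) (x n)
  have hle := scaledForm_succ_self_le hΛ φ n (x n)
  rw [Real.norm_of_nonneg hnonneg, Real.norm_of_nonneg (by linarith)]
  linarith

lemma slope_isBigO [Nonempty ι] (D : IsStableDesign S L φ) (x : ℕ → ι → ℝ) :
    (fun n => (scaledForm L⁻¹ φ (n + 1)).toBilin' (φ n) (x n) ^ 2) =O[atTop] fun n =>
      (scaledForm L⁻¹ φ (n + 1)).toBilin' (φ n) (φ n) *
        (1 + (scaledForm L⁻¹ φ n).toBilin' (x n) (x n)) := by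
  refine .trans (.of_bound' (Eventually.of_forall fun n => ?_)) (D.step_mul_form_isBigO x)
  have hform := posSemidef_scaledForm D.posDef_limit.inv.posSemidef φ (n + 1)
  rw [Real.norm_of_nonneg (sq_nonneg _)]
  exact (toBilin'_sq_le hform (φ n) (x n)).trans (le_abs_self _)

lemma isAsymptoticPath [Nonempty ι] (D : IsStableDesign S L φ) (x : ℕ → ι → ℝ) :
    IsAsymptoticPath (fun n => (scaledForm L⁻¹ φ n).toBilin' (x n) (x n))
      (fun n => (scaledForm L⁻¹ φ (n + 1)).toBilin' (φ n) (φ n))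
      (fun n => (scaledForm L⁻¹ φ (n + 1)).toBilin' (φ n) (x n) ^ 2)
      (fun n => (scaledForm L⁻¹ φ (n + 1)).toBilin' (φ n) (x n) ^ 2)
      (fun n => (designGram S φ n)⁻¹.toBilin' (x n) (x n))
      (fun n => (designGram S φ (n + 1))⁻¹.toBilin' (x n) (x n))
      (fun n => (designGram S φ (n + 1))⁻¹.toBilin' (φ n) (φ n))
      (fun n => (designGram S φ (n + 1))⁻¹.toBilin' (φ n) (x n) ^ 2) := by
  have hΛ := D.posDef_limit.inv
  have hpos := gramScale_pos hΛ.posSemidef φ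
  have hform (n : ℕ) := posSemidef_scaledForm hΛ.posSemidef φ n
  have hslope := (toBilin'_sq_sub_sq_isLittleO hΛ (fun n => hpos (n + 1))
    ((tendsto_add_atTop_iff_nat 1).2 D.tendsto_scale_smul_inv) φ x).trans_isBigO
      (D.step_mul_form_isBigO x)
  have hfactor : Tendsto (fun n => (1 - (designGram S φ (n + 1))⁻¹.toBilin' (φ n) (φ n))⁻¹)
      atTop (𝓝 1) := by
    simpa using (D.tendsto_explosion.const_sub 1).inv₀ (by norm_num)
  exact {
    form := (toBilin'_self_sub_isLittleO hΛ hpos D.tendsto_scale_smul_inv x).trans_isBigO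
      (isBigO_one_add fun n => toBilin'_self_nonneg (hform n) (x n))
    step := D.step_sub_isLittleO
    decrease := by
      have hprod := mul_sub_mul_isLittleO
        ((Asymptotics.isLittleO_one_iff ℝ).2 (tendsto_sub_nhds_zero_iff.2 hfactor))
        (Asymptotics.isBigO_refl _ _) hslope (D.slope_isBigO x)
      refine hprod.congr (fun n => ?_) fun n => by ring
      rw [designGram_succ, toBilin'_inv_self_sub (posDef_designGram D.posDef_init φ n), one_mul,
        scaledForm]
    decrease_isBigO := D.slope_isBigO x
    slope := hslope
    slope_isBigO := D.slope_isBigO x }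

lemma error_sub_isLittleO [Nonempty ι] (D : IsStableDesign S L φ) (x : ℕ → ι → ℝ) :
    (fun n => (designGram S φ (n + 1)).toBilin' ((designGram S φ n)⁻¹ *ᵥ x n)
        ((designGram S φ n)⁻¹ *ᵥ x n) - (scaledForm L⁻¹ φ n).toBilin' (x n) (x n)) =o[atTop]
      fun n => 1 + (scaledForm L⁻¹ φ n).toBilin' (x n) (x n) := by
  have P := D.isAsymptoticPath x
  have hslope := P.slope.isBigO.add P.slope_isBigO
  have hfactor : Tendsto (fun n => (1 - (designGram S φ (n + 1))⁻¹.toBilin' (φ n) (φ n))⁻¹ ^ 2)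
      atTop (𝓝 1) := by
    simpa using ((D.tendsto_explosion.const_sub 1).inv₀ (by norm_num)).pow 2
  have hsmall := ((Asymptotics.isLittleO_one_iff ℝ).2 D.tendsto_step).mul_isBigO
    (Asymptotics.isBigO_refl (fun n => 1 + (scaledForm L⁻¹ φ n).toBilin' (x n) (x n)) atTop)
  refine (P.form.add (((hfactor.isBigO_one ℝ).mul hslope).trans_isLittleO
    (by simpa only [one_mul] using hsmall))).congr_left fun n => ?_
  rw [designGram_succ, toBilin'_add_vecMulVec_mulVec_inv (posDef_designGram D.posDef_init φ n)]
  ring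

end IsStableDesign

lemma isStableDesign_of_tendsto [Nonempty ι] (hS : S.PosDef) (hL : L.PosDef) {α : ℕ → ℝ}
    (hα : ∀ n, 0 < α n) (hαtop : Tendsto α atTop atTop)
    (hlim : Tendsto (fun n => (α n)⁻¹ • designGram S φ (n + 1)) atTop (𝓝 L))
    (hexpl : Tendsto (fun n => (designGram S φ (n + 1))⁻¹.toBilin' (φ n) (φ n)) atTop (𝓝 0)) :
    IsStableDesign S L φ :=
  have ⟨hscale, hgram⟩ := tendsto_inv_smul_designGram hL hα hαtop hlim
  ⟨hS, hL, hscale, hgram, hexpl⟩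

end Design

/-! ### The estimation error -/

section Score

variable {ι : Type*}

/-- The vector `-S θ + ∑_{k < n} e_k φ_k`, which the inverse Gram matrix maps to the error of the
least squares estimator of `θ`. The noise `e_k` is the one added to the prediction from `φ_k`. -/
def score [Fintype ι] (S : Matrix ι ι ℝ) (θ : ι → ℝ) (φ : ℕ → ι → ℝ) (e : ℕ → ℝ) (n : ℕ) : ι → ℝ :=
  -(S *ᵥ θ) + ∑ k ∈ range n, e k • φ k

lemma score_succ [Fintype ι] (S : Matrix ι ι ℝ) (θ : ι → ℝ) (φ : ℕ → ι → ℝ) (e : ℕ → ℝ) (n : ℕ) :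
    score S θ φ e (n + 1) = score S θ φ e n + e n • φ n := by
  rw [score, score, sum_range_succ, add_assoc]

lemma sum_smul_eq_designGram_mulVec_add_score [Fintype ι] (S : Matrix ι ι ℝ) (θ : ι → ℝ)
    (φ : ℕ → ι → ℝ) (e : ℕ → ℝ) (n : ℕ) :
    ∑ k ∈ range n, (θ ⬝ᵥ φ k + e k) • φ k = designGram S φ n *ᵥ θ + score S θ φ e n := by
  simp only [designGram, score, add_mulVec, sum_mulVec, vecMulVec_mulVec, op_smul_eq_smul,
    add_smul, sum_add_distrib, dotProduct_comm]
  abel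

variable {Ω : Type*} {m0 : MeasurableSpace Ω} {μ : Measure Ω} {F : Filtration ℕ m0}
  {e : ℕ → Ω → ℝ} {Φ : ℕ → Ω → ι → ℝ}

lemma stronglyMeasurable_designGram [Finite ι] (hΦ : ∀ n, StronglyMeasurable[F n] (Φ n))
    (S : Matrix ι ι ℝ) {n m : ℕ} (hnm : n ≤ m + 1) :
    StronglyMeasurable[F m] fun ω => designGram S (Φ · ω) n := by
  simp only [designGram]
  refine stronglyMeasurable_const.add (Finset.stronglyMeasurable_fun_sum _ fun k hk => ?_)
  have hkm : k ≤ m := by rw [Finset.mem_range] at hk; omega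
  exact (continuous_id.matrix_vecMulVec continuous_id).comp_stronglyMeasurable
    ((hΦ k).mono (F.mono hkm))

variable [Fintype ι]

lemma stronglyMeasurable_score (he : ∀ n, StronglyMeasurable[F (n + 1)] (e n))
    (hΦ : ∀ n, StronglyMeasurable[F n] (Φ n)) (S : Matrix ι ι ℝ) (θ : ι → ℝ) (n : ℕ) :
    StronglyMeasurable[F n] fun ω => score S θ (Φ · ω) (e · ω) n := by
  simp only [score]
  refine stronglyMeasurable_const.add (Finset.stronglyMeasurable_fun_sum _ fun k hk => ?_)
  have hkn := Finset.mem_range.1 hk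
  exact ((he k).mono (F.mono hkn)).smul ((hΦ k).mono (F.mono hkn.le))

lemma stronglyMeasurable_scaledForm (hΦ : ∀ n, StronglyMeasurable[F n] (Φ n))
    (Λ : Matrix ι ι ℝ) {n m : ℕ} (hnm : n ≤ m + 1) :
    StronglyMeasurable[F m] fun ω => scaledForm Λ (Φ · ω) n := by
  have hscale : StronglyMeasurable[F m] fun ω => gramScale Λ (Φ · ω) n := by
    simp only [gramScale]
    refine stronglyMeasurable_const.add
      ((Finset.stronglyMeasurable_fun_sum _ fun k hk => ?_).const_mul _)
    have hkm : k ≤ m := by rw [Finset.mem_range] at hk; omega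
    exact (continuous_id.dotProduct (continuous_const.matrix_mulVec continuous_id)
      ).comp_stronglyMeasurable ((hΦ k).mono (F.mono hkm))
  exact hscale.measurable.inv.stronglyMeasurable.smul_const Λ

variable [DecidableEq ι]

lemma isQuadraticRecursion_toBilin' {b : ℝ} {B : ℕ → Ω → Matrix ι ι ℝ} {M : ℕ → Ω → ι → ℝ}
    (hB : ∀ n ω, (B n ω).PosSemidef)
    (hBmeas : ∀ {n m}, n ≤ m + 1 → StronglyMeasurable[F m] (B n))
    (hΦ : ∀ n, StronglyMeasurable[F n] (Φ n)) (hM : ∀ n, StronglyMeasurable[F n] (M n))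
    (hsucc : ∀ n ω, M (n + 1) ω = M n ω + e n ω • Φ n ω)
    (hanti : ∀ n ω x, (B (n + 1) ω).toBilin' x x ≤ (B n ω).toBilin' x x)
    (hle : ∀ n ω, (B (n + 1) ω).toBilin' (Φ n ω) (Φ n ω) ≤ b) :
    IsQuadraticRecursion F b e (fun n ω => (B n ω).toBilin' (M n ω) (M n ω))
      (fun n ω => (B (n + 1) ω).toBilin' (M n ω) (M n ω))
      (fun n ω => (B (n + 1) ω).toBilin' (Φ n ω) (M n ω))
      (fun n ω => (B (n + 1) ω).toBilin' (Φ n ω) (Φ n ω)) where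
  stronglyMeasurable n := stronglyMeasurable_toBilin' (hBmeas n.le_succ) (hM n) (hM n)
  stronglyMeasurable_predicted n := stronglyMeasurable_toBilin' (hBmeas le_rfl) (hM n) (hM n)
  stronglyMeasurable_slope n := stronglyMeasurable_toBilin' (hBmeas le_rfl) (hΦ n) (hM n)
  stronglyMeasurable_step n := stronglyMeasurable_toBilin' (hBmeas le_rfl) (hΦ n) (hΦ n)
  step_nonneg n ω := toBilin'_self_nonneg (hB (n + 1) ω) _
  step_le := hle
  predicted_nonneg n ω := toBilin'_self_nonneg (hB (n + 1) ω) _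
  predicted_le n ω := hanti n ω _
  slope_sq_le n ω := toBilin'_sq_le (hB (n + 1) ω) _ _
  succ n ω := by
    have hsymm := (isSymm_toBilin' (hB (n + 1) ω)).eq (M n ω) (Φ n ω)
    simp only [hsucc, map_add, map_smul, LinearMap.add_apply, LinearMap.smul_apply, smul_eq_mul,
      hsymm]
    ring

lemma isRecursionPair_score [Nonempty ι] {S L : Matrix ι ι ℝ} (θ : ι → ℝ) (hS : S.PosDef)
    (hL : L.PosDef) (he : ∀ n, StronglyMeasurable[F (n + 1)] (e n))
    (hΦ : ∀ n, StronglyMeasurable[F n] (Φ n)) (hD : ∀ᵐ ω ∂μ, IsStableDesign S L (Φ · ω)) :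
    IsRecursionPair F μ (Fintype.card ι) (Fintype.card ι) 1 e
      (fun n ω => (scaledForm L⁻¹ (Φ · ω) n).toBilin' (score S θ (Φ · ω) (e · ω) n)
        (score S θ (Φ · ω) (e · ω) n))
      (fun n ω => (scaledForm L⁻¹ (Φ · ω) (n + 1)).toBilin' (score S θ (Φ · ω) (e · ω) n)
        (score S θ (Φ · ω) (e · ω) n))
      (fun n ω => (scaledForm L⁻¹ (Φ · ω) (n + 1)).toBilin' (Φ n ω) (score S θ (Φ · ω) (e · ω) n))
      (fun n ω => (scaledForm L⁻¹ (Φ · ω) (n + 1)).toBilin' (Φ n ω) (Φ n ω))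
      (fun n ω => (designGram S (Φ · ω) n)⁻¹.toBilin' (score S θ (Φ · ω) (e · ω) n)
        (score S θ (Φ · ω) (e · ω) n))
      (fun n ω => (designGram S (Φ · ω) (n + 1))⁻¹.toBilin' (score S θ (Φ · ω) (e · ω) n)
        (score S θ (Φ · ω) (e · ω) n))
      (fun n ω => (designGram S (Φ · ω) (n + 1))⁻¹.toBilin' (Φ n ω) (score S θ (Φ · ω) (e · ω) n))
      (fun n ω => (designGram S (Φ · ω) (n + 1))⁻¹.toBilin' (Φ n ω) (Φ n ω)) :=
  have hΛ := hL.inv.posSemidef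
  have hM := stronglyMeasurable_score he hΦ S θ
  { dim_pos := by positivity
    fst := isQuadraticRecursion_toBilin' (fun n ω => posSemidef_scaledForm hΛ _ n)
      (stronglyMeasurable_scaledForm hΦ L⁻¹) hΦ hM (fun n ω => score_succ S θ _ _ n)
      (fun n ω => scaledForm_succ_self_le hΛ _ n) fun n ω => scaledForm_self_le_card hΛ (Φ · ω) n
    snd := isQuadraticRecursion_toBilin' (fun n ω => (posDef_designGram hS _ n).inv.posSemidef)
      (fun hnm => stronglyMeasurable_matrix_inv (stronglyMeasurable_designGram hΦ S hnm)) hΦ hM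
      (fun n ω => score_succ S θ _ _ n) (fun n ω => designGram_inv_succ_self_le hS _ n)
      fun n ω => by
        simpa only [designGram_succ] using
          (toBilin'_inv_add_vecMulVec_self_lt_one (posDef_designGram hS (Φ · ω) n) (Φ n ω)).le
    predicted_eq n ω := scaledForm_succ hΛ (Φ · ω) n _ _
    tendsto_clock := hD.mono fun _ D => D.tendsto_clock
    tendsto_step := hD.mono fun _ D => D.tendsto_step
    isAsymptoticPath := hD.mono fun _ D => D.isAsymptoticPath _ }

end Score

section Limit

lemma tendsto_inv_mul_sum_Icc {u c l : ℕ → ℝ} {v : ℝ}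
    (hlim : Tendsto (fun n => (∑ k ∈ range n, u k) / c n) atTop (𝓝 v))
    (hc : Tendsto c atTop atTop) (hcl : Asymptotics.IsEquivalent atTop c l) :
    Tendsto (fun n => (l (n + 1))⁻¹ * ∑ k ∈ Icc 1 n, u k) atTop (𝓝 v) := by
  have hl := (Asymptotics.IsEquivalent.refl.div hcl).tendsto_nhds hlim
  have hshift := (tendsto_add_atTop_iff_nat 1).2
    (hl.sub ((tendsto_const_nhds (x := u 0)).div_atTop (hcl.tendsto_atTop hc)))
  rw [sub_zero] at hshift
  refine hshift.congr fun n => ?_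
  rw [Pi.div_apply, sum_range_eq_add_Ico _ n.succ_pos, n.succ_eq_add_one,
    Finset.Ico_add_one_right_eq_Icc]
  ring

theorem tendsto_inv_log_det_mul_sum {ι Ω : Type*} [Fintype ι] [DecidableEq ι] [Nonempty ι]
    {m0 : MeasurableSpace Ω} {μ : Measure Ω} [IsProbabilityMeasure μ] {F : Filtration ℕ m0}
    {e : ℕ → Ω → ℝ} {Φ : ℕ → Ω → ι → ℝ} {S L : Matrix ι ι ℝ} (θ : ι → ℝ) {a σ : ℝ} {j : ℕ}
    (hS : S.PosDef) (hL : L.PosDef) (he : IsHomoscedasticNoise F μ a σ e)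
    (ha : 2 * ((j : ℝ) + 1) < a) (hΦ : ∀ n, StronglyMeasurable[F n] (Φ n))
    (hD : ∀ᵐ ω ∂μ, IsStableDesign S L (Φ · ω)) :
    ∀ᵐ ω ∂μ, Tendsto (fun n => (Real.log (designGram S (Φ · ω) (n + 1)).det)⁻¹ * ∑ k ∈ Icc 1 n,
        (designGram S (Φ · ω) (k + 1))⁻¹.toBilin' (Φ k ω) (Φ k ω) *
          (designGram S (Φ · ω) (k + 1)).toBilin'
            ((designGram S (Φ · ω) k)⁻¹ *ᵥ score S θ (Φ · ω) (e · ω) k)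
            ((designGram S (Φ · ω) k)⁻¹ *ᵥ score S θ (Φ · ω) (e · ω) k) ^ (j + 1))
      atTop (𝓝 (∏ i ∈ range (j + 1), σ ^ 2 * (Fintype.card ι + 2 * i))) := by
  have P := isRecursionPair_score θ hS hL he.moment.adapted hΦ hD
  have hsum := P.tendsto_sum_div_clock_of_isLittleO he ha
    (k := fun n ω => (designGram S (Φ · ω) (n + 1))⁻¹.toBilin' (Φ n ω) (Φ n ω))
    (D := fun n ω => (designGram S (Φ · ω) (n + 1)).toBilin'
      ((designGram S (Φ · ω) n)⁻¹ *ᵥ score S θ (Φ · ω) (e · ω) n)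
      ((designGram S (Φ · ω) n)⁻¹ *ᵥ score S θ (Φ · ω) (e · ω) n))
    (hD.mono fun ω D => D.step_sub_isLittleO)
    (hD.mono fun ω D => D.error_sub_isLittleO fun n => score S θ (Φ · ω) (e · ω) n)
  filter_upwards [hsum, hD] with ω hsum D
  exact (tendsto_inv_mul_sum_Icc hsum D.tendsto_clock D.clock_isEquivalent_log_det :)

lemma prod_range_succ_mul_add_two_mul (D v : ℝ) (j : ℕ) :
    ∏ i ∈ range (j + 1), v * (D + 2 * i) =
      D * v ^ (j + 1) * ∏ i ∈ Icc 1 j, (D + 2 * (i : ℝ)) := by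
  rw [prod_mul_distrib, prod_const, card_range, range_eq_Ico, prod_eq_prod_Ico_succ_bot j.succ_pos,
    zero_add, j.succ_eq_add_one, Finset.Ico_add_one_right_eq_Icc]
  simp only [Nat.cast_zero, mul_zero, add_zero]
  ring

lemma lsq_sub_eq_inv_mulVec_score {Ω : Type*} {d : ℕ} {S : Matrix (Fin d) (Fin d) ℝ}
    (hS : S.PosDef) {ε : ℕ → Ω → ℝ} {Φ : ℕ → Ω → Fin d → ℝ} {X : ℕ → Ω → ℝ} {θ : Fin d → ℝ}
    (hmodel : ∀ n ω, X (n + 1) ω = θ ⬝ᵥ Φ n ω + ε (n + 1) ω) {k : ℕ} (hk : 1 ≤ k) (ω : Ω) :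
    lsq S Φ X k ω - θ =
      (designGram S (Φ · ω) k)⁻¹ *ᵥ score S θ (Φ · ω) (fun n => ε (n + 1) ω) k := by
  obtain ⟨n, rfl⟩ := Nat.exists_eq_add_of_le' hk
  have hdet := (posDef_designGram hS (Φ · ω) (n + 1)).det_pos.ne'.isUnit
  have hnormal : ∑ k ∈ Icc 1 (n + 1), X k ω • Φ (k - 1) ω = designGram S (Φ · ω) (n + 1) *ᵥ θ +
      score S θ (Φ · ω) (fun n => ε (n + 1) ω) (n + 1) := by
    rw [← sum_smul_eq_designGram_mulVec_add_score, ← Finset.Ico_add_one_right_eq_Icc,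
      sum_Ico_eq_sum_range]
    refine sum_congr rfl fun k _ => ?_
    rw [add_comm 1 k, hmodel, Nat.add_sub_cancel]
  rw [lsq, hnormal, Nat.add_sub_cancel]
  change (designGram S (Φ · ω) (n + 1))⁻¹ *ᵥ _ - θ = _
  rw [mulVec_add, mulVec_mulVec, nonsing_inv_mul _ hdet, one_mulVec, add_sub_cancel_left]

end Limit

/-- **Corollary 3, first part**: a.s.
`(1/log d_n) ∑_{k=1}^n f_k ((θ̂_k - θ)ᵗ S_k (θ̂_k - θ))^p → ℓ(p) = d σ^{2p} ∏_{j=1}^{p-1}(d+2j)`. -/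
theorem weighted_estimation_error_limit
    {Ω : Type*} {m0 : MeasurableSpace Ω} {μ : Measure Ω} [IsProbabilityMeasure μ]
    (F : Filtration ℕ m0) {d : ℕ} (hd : 0 < d)
    (ε : ℕ → Ω → ℝ) (Φ : ℕ → Ω → Fin d → ℝ) (X : ℕ → Ω → ℝ) (θ : Fin d → ℝ)
    (S L : Matrix (Fin d) (Fin d) ℝ) (hS : S.PosDef) (hL : L.PosDef)
    (σ : ℝ) (p : ℕ) (hp : 1 ≤ p) (a : ℝ) (ha : 2 * p < a)
    (α : ℕ → Ω → ℝ)
    (hmodel : ∀ n ω, X (n + 1) ω = θ ⬝ᵥ Φ n ω + ε (n + 1) ω)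
    (hεadapt : ∀ n, StronglyMeasurable[F n] (ε n))
    (hεint : ∀ n, Integrable (ε n) μ)
    (hΦadapt : ∀ n, StronglyMeasurable[F n] (Φ n))
    (hXadapt : ∀ n, StronglyMeasurable[F n] (X n))
    (hmds : ∀ n, μ[ε (n + 1)|F n] =ᵐ[μ] 0)
    (hvar : ∀ n, μ[fun ω => ε (n + 1) ω ^ 2|F n] =ᵐ[μ] fun _ => σ ^ 2)
    (hmomint : ∀ n, Integrable (fun ω => |ε (n + 1) ω| ^ a) μ)
    (hmom : ∀ᵐ ω ∂μ, ∃ C : ℝ, ∀ n, (μ[fun ω => |ε (n + 1) ω| ^ a|F n]) ω ≤ C)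
    (hf0 : ∀ᵐ ω ∂μ, Tendsto (fun n => expl S Φ n ω) atTop (𝓝 0))
    (hαmeas : ∀ n, Measurable (α n))
    (hαpos : ∀ n ω, 0 < α n ω)
    (hαmono : ∀ᵐ ω ∂μ, Monotone fun n => α n ω)
    (hαtop : ∀ᵐ ω ∂μ, Tendsto (fun n => α n ω) atTop atTop)
    (hconv : ∀ᵐ ω ∂μ, Tendsto (fun n => (α n ω)⁻¹ • Smat S Φ n ω) atTop (𝓝 L)) :
    ∀ᵐ ω ∂μ, Tendsto (fun n =>
      (Real.log ((Smat S Φ n ω).det))⁻¹ *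
        ∑ k ∈ Finset.Icc 1 n,
          expl S Φ k ω *
            ((lsq S Φ X k ω - θ) ⬝ᵥ (Smat S Φ k ω *ᵥ (lsq S Φ X k ω - θ))) ^ p)
      atTop (𝓝 ((d : ℝ) * σ ^ (2 * p) * ∏ j ∈ Finset.Icc 1 (p - 1), ((d : ℝ) + 2 * (j : ℝ)))) := by
  obtain ⟨j, rfl⟩ := Nat.exists_eq_add_of_le' hp
  have : Nonempty (Fin d) := Fin.pos_iff_nonempty.1 hd
  have hnoise : IsHomoscedasticNoise F μ a σ fun n => ε (n + 1) :=
    ⟨⟨fun n => hεadapt (n + 1), hmomint, hmom⟩, hmds, hvar⟩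
  have hdesign : ∀ᵐ ω ∂μ, IsStableDesign S L (Φ · ω) := by
    filter_upwards [hαtop, hconv, hf0] with ω htop hconv hf0
    refine isStableDesign_of_tendsto hS hL (fun n => hαpos n ω) htop hconv ?_
    simp only [toBilin'_apply']
    exact hf0
  filter_upwards [tendsto_inv_log_det_mul_sum θ hS hL hnoise (by exact_mod_cast ha) hΦadapt hdesign]
    with ω hlim
  rw [prod_range_succ_mul_add_two_mul, Fintype.card_fin, ← pow_mul] at hlim
  refine hlim.congr fun n => congrArg _ (sum_congr rfl fun k hk => ?_)
  rw [lsq_sub_eq_inv_mulVec_score hS hmodel (Finset.mem_Icc.1 hk).1, toBilin'_apply',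
    toBilin'_apply']
  rfl
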